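/- (All functions are locally s-harmonic up to a small error.) Let n ≥ 1, s ∈ (0,1), k ∈ ℕ, and let f : ℝⁿ → ℝ be k times continuously differentiable on an open neighborhood of the closed unit ball B̄₁. Then for every ε > 0 there exist R > 1 and a function u : ℝⁿ → ℝ such that: u is Hölder continuous of exponent s on ℝⁿ; u = 0 on ℝⁿ ∖ B_R; u is s-harmonic at every point of B₁; u is infinitely differentiable on B₁; and for every multi-index β with |β| ≤ k, sup_{x ∈ B₁} |D^β u(x) − D^β f(x)| < ε. -/

import Mathlib

open MeasureTheory Filter Metric Set
open scoped Topology

/-- The partial derivative of `f : ℝⁿ → ℝ` in the `i`-th coordinate direction. -/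
noncomputable def partialDeriv (n : ℕ) (i : Fin n)
    (f : EuclideanSpace ℝ (Fin n) → ℝ) : EuclideanSpace ℝ (Fin n) → ℝ :=
  fun x => fderiv ℝ f x (EuclideanSpace.single i 1)

/-- The multi-index derivative `D^β f = ∂₁^{β₁} ⋯ ∂ₙ^{βₙ} f`. -/
noncomputable def multiDeriv (n : ℕ) (β : Fin n → ℕ)
    (f : EuclideanSpace ℝ (Fin n) → ℝ) : EuclideanSpace ℝ (Fin n) → ℝ :=
  ((List.ofFn (fun i : Fin n => (partialDeriv n i)^[β i])).foldr (· ∘ ·) id) f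


noncomputable def pfun (s x : ℝ) : ℝ := (max x 0) ^ (s - 1)

lemma pfun_nonneg (s x : ℝ) : 0 ≤ pfun s x := Real.rpow_nonneg (le_max_right _ _) _

lemma pfun_of_nonpos {s x : ℝ} (hs : s ∈ Ioo (0:ℝ) 1) (hx : x ≤ 0) : pfun s x = 0 := by
  unfold pfun
  rw [max_eq_right hx, Real.zero_rpow]
  linarith [hs.2]

lemma pfun_of_pos {s x : ℝ} (hx : 0 ≤ x) : pfun s x = x ^ (s-1) := by
  unfold pfun
  rw [max_eq_left hx]

lemma measurable_pfun (s : ℝ) : Measurable (pfun s) := by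
  unfold pfun
  fun_prop

lemma pfun_eq_indicator {s : ℝ} (hs : s ∈ Ioo (0:ℝ) 1) :
    pfun s = (Ioi (0:ℝ)).indicator (fun x => x ^ (s-1)) := by
  ext x
  by_cases hx : 0 < x
  · rw [indicator_of_mem (by exact hx), pfun_of_pos hx.le]
  · rw [indicator_of_notMem (by exact hx), pfun_of_nonpos hs (not_lt.1 hx)]

lemma intervalIntegrable_pfun {s : ℝ} (hs : s ∈ Ioo (0:ℝ) 1) (a b : ℝ) :
    IntervalIntegrable (pfun s) volume a b := by
  rw [pfun_eq_indicator hs]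
  have h := intervalIntegral.intervalIntegrable_rpow' (a := a) (b := b) (r := s - 1) (by linarith [hs.1])
  rw [intervalIntegrable_iff] at h ⊢
  exact h.indicator measurableSet_Ioi

lemma integral_pfun_zero {s : ℝ} (hs : s ∈ Ioo (0:ℝ) 1) (b : ℝ) :
    ∫ x in (0:ℝ)..b, pfun s x = (max b 0) ^ s / s := by
  rcases le_total 0 b with hb | hb
  · rw [max_eq_left hb]
    rw [intervalIntegral.integral_congr (g := fun x => x ^ (s-1))]
    · rw [integral_rpow (Or.inl (by linarith [hs.1]))]
      simp [Real.zero_rpow hs.1.ne']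
    · intro x hx
      rw [uIcc_of_le hb] at hx
      exact pfun_of_pos hx.1
  · rw [max_eq_right hb, Real.zero_rpow hs.1.ne']
    rw [intervalIntegral.integral_congr (g := fun x => 0)]
    · simp
    · intro x hx
      rw [uIcc_of_ge hb] at hx
      exact pfun_of_nonpos hs hx.2

lemma integral_pfun {s : ℝ} (hs : s ∈ Ioo (0:ℝ) 1) (a b : ℝ) :
    ∫ x in a..b, pfun s x = ((max b 0) ^ s - (max a 0) ^ s) / s := by
  have := intervalIntegral.integral_interval_sub_left (intervalIntegrable_pfun hs 0 b)
    (intervalIntegrable_pfun hs 0 a)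
  rw [← this, integral_pfun_zero hs, integral_pfun_zero hs]
  ring

/-- the parameter integral -/
lemma integral_param {s : ℝ} (hs : s ∈ Ioo (0:ℝ) 1) (w c d: ℝ) (hw : 0 < w) :
    ∫ g in d..c, pfun s (w^2 + 2*g*w - 1) =
      ((max (w^2+2*c*w-1) 0)^s - (max (w^2+2*d*w-1) 0)^s) / (2*s*w) := by
  have h := intervalIntegral.integral_comp_mul_add (a := d) (b := c) (pfun s)
    (c := 2*w) (by positivity) (w^2-1)
  have h2 : ∀ g, 2*w*g + (w^2-1) = w^2 + 2*g*w-1 := by intro g; ring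
  simp only [h2] at h
  rw [h, integral_pfun hs]
  have := hs.1
  rw [smul_eq_mul]
  field_simp

lemma intervalIntegrable_param {s : ℝ} (hs : s ∈ Ioo (0:ℝ) 1) (w c d: ℝ) (hw : 0 < w) :
    IntervalIntegrable (fun g => pfun s (w^2 + 2*g*w - 1)) volume d c := by
  have h := ((intervalIntegrable_pfun hs (d + (w^2-1)/(2*w)) (c + (w^2-1)/(2*w))).comp_add_right
    ((w^2-1)/(2*w)))
  have h3 := (intervalIntegrable_pfun hs (2*w*d + (w^2-1)) (2*w*c + (w^2-1))).comp_add_right (w^2-1)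
  have h4 := h3.comp_mul_left (c := 2*w)
  have e : ∀ g, 2*w*g + (w^2-1) = w^2 + 2*g*w-1 := by intro g; ring
  simp only [e] at h4
  convert h4 using 1 <;> field_simp <;> ring

lemma intervalIntegrable_sq {s : ℝ} (hs : s ∈ Ioo (0:ℝ) 1) (m a b : ℝ) (hm : 1 ≤ m)
    (ha : -√m ≤ a) (hb : -√m ≤ b) :
    IntervalIntegrable (fun v => pfun s (v^2 - m)) volume a b := by
  have h1 := (intervalIntegrable_pfun hs (a - √m) (b - √m)).comp_sub_right (√m)
  simp only [sub_add_cancel] at h1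
  refine h1.mono_fun' (((measurable_pfun s).comp (by fun_prop)).aestronglyMeasurable) ?_
  refine (ae_restrict_mem measurableSet_uIoc).mono ?_
  intro v hv
  have hv1 : -√m ≤ v := by
    have := hv.1
    exact le_trans (le_min ha hb) this.le
  have hsm : 1 ≤ √m := Real.one_le_sqrt.2 hm
  have hsq : √m^2 = m := Real.sq_sqrt (by linarith)
  simp only []
  rw [Real.norm_of_nonneg (pfun_nonneg _ _)]
  rcases le_or_gt v (√m) with h | h
  · rw [pfun_of_nonpos hs]
    · exact pfun_nonneg _ _
    · nlinarith
  · rw [pfun_of_pos (by nlinarith), pfun_of_pos (by linarith)]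
    apply Real.rpow_le_rpow_of_nonpos
    · linarith
    · nlinarith
    · linarith [hs.2]

/-- the shift identity -/
lemma shift_identity {s : ℝ} (hs : s ∈ Ioo (0:ℝ) 1) (g W : ℝ) (hg : 0 ≤ g) (hW : g ≤ W) :
    (∫ w in (0:ℝ)..W, pfun s (w^2+2*g*w-1)) - (∫ w in (0:ℝ)..W, pfun s (w^2-2*g*w-1)) =
      ∫ v in (W-g)..(W+g), pfun s (v^2-(1+g^2)) := by
  have hm : (1:ℝ) ≤ 1 + g^2 := by nlinarith
  have hgs : g ≤ √(1+g^2) := Real.le_sqrt_of_sq_le (by linarith)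
  have e1 : ∫ w in (0:ℝ)..W, pfun s (w^2+2*g*w-1) = ∫ v in g..(W+g), pfun s (v^2-(1+g^2)) := by
    have := intervalIntegral.integral_comp_add_right (a := 0) (b := W)
      (fun v => pfun s (v^2-(1+g^2))) g
    rw [zero_add] at this
    rw [← this]
    congr 1; ext w; congr 1; ring
  have e2 : ∫ w in (0:ℝ)..W, pfun s (w^2-2*g*w-1) = ∫ v in (-g)..(W-g), pfun s (v^2-(1+g^2)) := by
    have := intervalIntegral.integral_comp_sub_right (a := 0) (b := W)
      (fun v => pfun s (v^2-(1+g^2))) g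
    rw [zero_sub] at this
    rw [← this]
    congr 1; ext w; congr 1; ring
  have e3 : ∫ v in (-g)..g, pfun s (v^2-(1+g^2)) = 0 := by
    rw [intervalIntegral.integral_congr (g := fun x => 0)]
    · simp
    · intro x hx
      rw [uIcc_of_le (by linarith)] at hx
      apply pfun_of_nonpos hs
      nlinarith [hx.1, hx.2]
  have I := fun a b ha hb => intervalIntegrable_sq hs (1+g^2) a b hm ha hb
  have hg0 : 0 ≤ √(1+g^2) := Real.sqrt_nonneg _
  have a1 := intervalIntegral.integral_add_adjacent_intervals (I (-g) g (by linarith) (by linarith))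
    (I g (W+g) (by linarith) (by linarith))
  have a2 := intervalIntegral.integral_add_adjacent_intervals
    (I (-g) (W-g) (by linarith) (by linarith))
    (I (W-g) (W+g) (by linarith) (by linarith))
  rw [e1, e2]
  linarith

lemma shift_bound {s : ℝ} (hs : s ∈ Ioo (0:ℝ) 1) (g C W : ℝ) (hg : 0 ≤ g) (hgC : g ≤ C)
    (hW : 2 * C ≤ W) (hW2 : 8 * (1 + C^2) ≤ W^2) :
    ‖∫ v in (W-g)..(W+g), pfun s (v^2-(1+g^2))‖ ≤ 2 * C * (W^2/8)^(s-1) := by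
  have h := intervalIntegral.norm_integral_le_of_norm_le_const (a := W-g) (b := W+g)
    (f := fun v => pfun s (v^2-(1+g^2))) (C := (W^2/8)^(s-1)) ?_
  · refine h.trans ?_
    have : |W + g - (W-g)| = 2 * g := by
      rw [show W + g - (W-g) = 2*g by ring, abs_of_nonneg (by linarith)]
    rw [this, mul_comm]
    have : 0 ≤ (W^2/8)^(s-1) := by positivity
    gcongr
  · intro v hv
    rw [uIoc_of_le (by linarith)] at hv
    have hv1 := hv.1
    have hv2 : W/2 ≤ v := by linarith
    have : W^2/4 ≤ v^2 := by nlinarith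
    have hg2 : g^2 ≤ C^2 := by nlinarith
    rw [Real.norm_of_nonneg (pfun_nonneg _ _), pfun_of_pos (by nlinarith)]
    apply Real.rpow_le_rpow_of_nonpos
    · nlinarith
    · nlinarith
    · linarith [hs.2]


lemma integrable_prod_param {s : ℝ} (hs : s ∈ Ioo (0:ℝ) 1) (σ c W : ℝ) (hσ : σ = 1 ∨ σ = -1)
    (hc : 0 ≤ c) :
    Integrable (Function.uncurry fun (w g : ℝ) => pfun s (w^2 + 2*(σ*g)*w - 1))
      ((volume.restrict (Ioc 0 W)).prod (volume.restrict (Ioc 0 c))) := by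
  have hs0 := hs.1
  have key : ∀ w : ℝ, 0 < w →
      IntervalIntegrable (fun g => pfun s (w^2 + 2*(σ*g)*w - 1)) volume 0 c ∧
      ∫ g in (0:ℝ)..c, pfun s (w^2 + 2*(σ*g)*w - 1) =
        σ * ((max (w^2+2*(σ*c)*w-1) 0)^s - (max (w^2-1) 0)^s) / (2*s*w) := by
    intro w hw
    rcases hσ with rfl | rfl
    · simp only [one_mul]
      refine ⟨intervalIntegrable_param hs w c 0 hw, ?_⟩
      rw [integral_param hs w c 0 hw]; simp
    · constructor
      · have := (intervalIntegrable_param hs w (-c) 0 hw).comp_mul_left (c := -1)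
        simpa using this
      · have := intervalIntegral.integral_comp_neg (a := 0) (b := c)
          (fun g => pfun s (w^2 + 2*g*w - 1))
        simp only [neg_one_mul]
        rw [this, integral_param hs w _ _ hw]
        simp
  have hmeas : Measurable (Function.uncurry fun (w g : ℝ) => pfun s (w^2 + 2*(σ*g)*w - 1)) := by
    have : (Function.uncurry fun (w g : ℝ) => pfun s (w^2 + 2*(σ*g)*w - 1)) =
      pfun s ∘ fun q : ℝ × ℝ => q.1^2 + 2*(σ*q.2)*q.1 - 1 := by ext ⟨a, b⟩; rfl
    rw [this]
    exact (measurable_pfun s).comp (by fun_prop)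
  rw [integrable_prod_iff hmeas.aestronglyMeasurable]
  constructor
  · refine (ae_restrict_mem measurableSet_Ioc).mono ?_
    intro w hw
    have := (key w hw.1).1
    rw [intervalIntegrable_iff, uIoc_of_le hc] at this
    exact this
  · set w0 : ℝ := 1/(2+2*c) with hw0
    have hw0p : 0 < w0 := by positivity
    refine Measure.integrableOn_of_bounded (s := Ioc 0 W) (M := (W^2+2*c*W)^s / (2*s*w0))
      (by simp) ?_ ?_
    · exact (hmeas.norm.stronglyMeasurable.integral_prod_right).aestronglyMeasurable
    · refine (ae_restrict_mem measurableSet_Ioc).mono ?_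
      intro w hw
      have h1 : ∫ g, ‖Function.uncurry (fun (w g : ℝ) => pfun s (w^2 + 2*(σ*g)*w - 1)) (w, g)‖
          ∂(volume.restrict (Ioc 0 c)) = ∫ g in (0:ℝ)..c, pfun s (w^2 + 2*(σ*g)*w - 1) := by
        rw [intervalIntegral.integral_of_le hc]
        congr 1; ext g
        exact Real.norm_of_nonneg (pfun_nonneg _ _)
      rw [h1, (key w hw.1).2]
      have hwp := hw.1
      have hwW := hw.2
      have hW : 0 < W := lt_of_lt_of_le hwp hwW
      rw [norm_div, Real.norm_of_nonneg (by positivity : 0 ≤ 2 * s * w)]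
      have hσ' : ‖σ‖ = 1 := by rcases hσ with rfl | rfl <;> simp
      have hσu : σ ≤ 1 := by rcases hσ with rfl | rfl <;> norm_num
      rw [norm_mul, hσ', one_mul]
      have hσc : σ * c ≤ c := by nlinarith
      have hcw : σ * c * w ≤ c * w := by gcongr
      rcases le_or_gt w w0 with h | h
      · have hw1 : w * (2 + 2*c) ≤ 1 := by
          rw [hw0, le_div_iff₀ (by positivity)] at h; exact h
        have hwle : w ≤ 1 := by nlinarith
        have z1 : max (w^2+2*(σ*c)*w-1) 0 = 0 := max_eq_right (by nlinarith)
        have z2 : max (w^2-1) 0 = 0 := max_eq_right (by nlinarith)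
        rw [z1, z2]
        simp
        positivity
      · gcongr
        have m1 : (max (w^2+2*(σ*c)*w-1) 0)^s ≤ (W^2+2*c*W)^s := by
          apply Real.rpow_le_rpow (le_max_right _ _) _ hs0.le
          apply max_le _ (by positivity)
          have : c * w ≤ c * W := by gcongr
          nlinarith
        have m2 : (max (w^2-1) 0)^s ≤ (W^2+2*c*W)^s := by
          apply Real.rpow_le_rpow (le_max_right _ _) _ hs0.le
          apply max_le _ (by positivity)
          have : 0 ≤ c * W := by positivity
          nlinarith
        have p1 : 0 ≤ (max (w^2+2*(σ*c)*w-1) 0)^s := by positivity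
        have p2 : 0 ≤ (max (w^2-1) 0)^s := by positivity
        rw [Real.norm_eq_abs, abs_le]
        constructor <;> linarith

noncomputable def hfun (s c w : ℝ) : ℝ :=
  w⁻¹ * ((max (w^2+2*c*w-1) 0)^s + (max (w^2-2*c*w-1) 0)^s - 2*(max (w^2-1) 0)^s)

lemma hfun_eq {s : ℝ} (hs : s ∈ Ioo (0:ℝ) 1) (c w : ℝ) (hw : 0 < w) :
    hfun s c w = 2*s*((∫ g in (0:ℝ)..c, pfun s (w^2 + 2*(1*g)*w - 1)) -
      (∫ g in (0:ℝ)..c, pfun s (w^2 + 2*(-1*g)*w - 1))) := by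
  have hs0 := hs.1
  have := intervalIntegral.integral_comp_neg (a := 0) (b := c)
          (fun g => pfun s (w^2 + 2*g*w - 1))
  simp only [neg_one_mul, one_mul]
  rw [this, integral_param hs w _ _ hw, integral_param hs w _ _ hw]
  unfold hfun
  have e : w ^ 2 + 2 * (-c) * w - 1 = w^2-2*c*w-1 := by ring
  rw [e]
  simp only [mul_zero, zero_mul, add_zero, neg_zero]
  field_simp
  ring

lemma hfun_bound {s : ℝ} (hs : s ∈ Ioo (0:ℝ) 1) (c C W : ℝ) (hc : 0 ≤ c) (hcC : c ≤ C)
    (hW : 2 * C ≤ W) (hW2 : 8 * (1 + C^2) ≤ W^2) :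
    ‖∫ w in Ioc 0 W, hfun s c w‖ ≤ 2 * s * (2 * C * (W^2/8)^(s-1) * C) := by
  have hs0 := hs.1
  have i1 := integrable_prod_param hs 1 c W (Or.inl rfl) hc
  have i2 := integrable_prod_param hs (-1) c W (Or.inr rfl) hc
  have j1 := i1.integral_prod_left
  have j2 := i2.integral_prod_left
  have k1 := i1.integral_prod_right
  have k2 := i2.integral_prod_right
  simp only [Function.uncurry_apply_pair] at j1 j2 k1 k2
  have e : ∫ w in Ioc 0 W, hfun s c w = 2*s*((∫ w in Ioc 0 W, ∫ g in Ioc 0 c, pfun s (w^2 + 2*(1*g)*w - 1)) -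
      (∫ w in Ioc 0 W, ∫ g in Ioc 0 c, pfun s (w^2 + 2*(-1*g)*w - 1))) := by
    rw [← integral_sub j1 j2, ← integral_const_mul]
    apply setIntegral_congr_fun measurableSet_Ioc
    intro w hw
    simp only []
    rw [hfun_eq hs c w hw.1, intervalIntegral.integral_of_le hc, intervalIntegral.integral_of_le hc]
  rw [e, integral_integral_swap i1, integral_integral_swap i2,
    ← integral_sub k1 k2, norm_mul,
    Real.norm_of_nonneg (by positivity : 0 ≤ 2 * s)]
  gcongr
  have hb : ∀ g ∈ Ioc 0 c, ‖(∫ w in Ioc 0 W, pfun s (w^2 + 2*(1*g)*w - 1)) -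
      (∫ w in Ioc 0 W, pfun s (w^2 + 2*(-1*g)*w - 1))‖ ≤ 2 * C * (W^2/8)^(s-1) := by
    intro g hg
    have := shift_bound hs g C W hg.1.le (hg.2.trans hcC) hW hW2
    rw [← shift_identity hs g W hg.1.le (by linarith [hg.1, hg.2]),
      intervalIntegral.integral_of_le (by linarith [hg.1, hg.2]),
      intervalIntegral.integral_of_le (by linarith [hg.1, hg.2])] at this
    have q1 : ∀ w, w^2 + 2*(1*g)*w - 1 = w^2+2*g*w-1 := fun w => by ring
    have q2 : ∀ w, w^2 + 2*(-1*g)*w - 1 = w^2-2*g*w-1 := fun w => by ring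
    simp only [q1, q2]
    exact this
  have := norm_setIntegral_le_of_norm_le_const (μ := volume) (s := Ioc 0 c) (by simp) hb
  refine this.trans ?_
  simp only [Real.volume_real_Ioc, sub_zero, max_eq_left hc]
  have : 0 ≤ 2 * C * (W^2/8)^(s-1) := by
    have : 0 ≤ C := hc.trans hcC
    positivity
  gcongr


noncomputable def gfun (s c t : ℝ) : ℝ :=
  (2 - (max (1-2*c*t-t^2) 0)^s - (max (1+2*c*t-t^2) 0)^s) * t^(-1-2*s)

lemma measurable_gfun (s c : ℝ) : Measurable (gfun s c) := by
  unfold gfun; fun_prop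

lemma gfun_neg (s c t : ℝ) : gfun s (-c) t = gfun s c t := by
  unfold gfun
  rw [show 1 - 2*(-c)*t-t^2 = 1+2*c*t-t^2 by ring, show 1 + 2*(-c)*t-t^2 = 1-2*c*t-t^2 by ring]
  ring

lemma gfun_integrableOn {s : ℝ} (hs : s ∈ Ioo (0:ℝ) 1) (c δ : ℝ) (hδ : 0 < δ) :
    IntegrableOn (gfun s c) (Ioi δ) := by
  have h0 := integrableOn_Ioi_rpow_of_lt (a := -1-2*s) (by linarith [hs.1]) hδ
  refine Integrable.mono' (h0.const_mul (2 + 2*(1+c^2)^s)) (measurable_gfun s c).aestronglyMeasurable ?_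
  refine (ae_restrict_mem measurableSet_Ioi).mono ?_
  intro t ht
  have ht0 : 0 < t := hδ.trans ht
  unfold gfun
  rw [norm_mul, Real.norm_of_nonneg (by positivity : 0 ≤ t^(-1-2*s))]
  gcongr
  have m1 : (max (1-2*c*t-t^2) 0)^s ≤ (1+c^2)^s := by
    apply Real.rpow_le_rpow (le_max_right _ _) _ hs.1.le
    apply max_le _ (by positivity)
    nlinarith [sq_nonneg (c+t)]
  have m2 : (max (1+2*c*t-t^2) 0)^s ≤ (1+c^2)^s := by
    apply Real.rpow_le_rpow (le_max_right _ _) _ hs.1.le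
    apply max_le _ (by positivity)
    nlinarith [sq_nonneg (c-t)]
  have p1 : 0 ≤ (max (1-2*c*t-t^2) 0)^s := by positivity
  have p2 : 0 ≤ (max (1+2*c*t-t^2) 0)^s := by positivity
  rw [Real.norm_eq_abs, abs_le]
  constructor <;> linarith

lemma gfun_hfun (s c x : ℝ) (hx : 0 < x) :
    x^(-1-1:ℝ) * (gfun s c (x^(-1:ℝ)) - gfun s 0 (x^(-1:ℝ))) = - hfun s c x := by
  have hxi : x^(-1:ℝ) = x⁻¹ := Real.rpow_neg_one x
  have key : ∀ d : ℝ, (max (1+2*d*x⁻¹-x⁻¹^2) 0)^s = (max (x^2+2*d*x-1) 0)^s * x^(-2*s) := by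
    intro d
    have : max (1+2*d*x⁻¹-x⁻¹^2) 0 = max (x^2+2*d*x-1) 0 * x^(-2:ℝ) := by
      rw [max_mul_of_nonneg _ _ (by positivity), zero_mul]
      congr 1
      rw [show (-2:ℝ) = -(2:ℕ) by norm_num, Real.rpow_neg hx.le, Real.rpow_natCast]
      field_simp
    rw [this, Real.mul_rpow (le_max_right _ _) (by positivity), ← Real.rpow_mul hx.le]
  unfold gfun hfun
  rw [hxi]
  have k1 := key c
  have k2 := key (-c)
  have k3 := key 0
  rw [show 1 + 2*(-c)*x⁻¹-x⁻¹^2 = 1-2*c*x⁻¹-x⁻¹^2 by ring,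
    show x^2+2*(-c)*x-1 = x^2-2*c*x-1 by ring] at k2
  rw [show 1 + 2*0*x⁻¹-x⁻¹^2 = 1-x⁻¹^2 by ring,
    show x^2+2*0*x-1 = x^2-1 by ring] at k3
  rw [show 1 + 2*0*x⁻¹-x⁻¹^2 = 1-x⁻¹^2 by ring, show 1 - 2*0*x⁻¹-x⁻¹^2 = 1-x⁻¹^2 by ring]
  rw [k1, k2, k3]
  have e1 : x⁻¹^(-1-2*s) = x * x^(2*s) := by
    rw [Real.inv_rpow hx.le, ← Real.rpow_neg hx.le]
    rw [show -(-1-2*s) = 1+2*s by ring, Real.rpow_add hx, Real.rpow_one]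
  have e2 : x^(-1-1:ℝ) = x⁻¹*x⁻¹ := by
    rw [show (-1-1:ℝ) = -1 + -1 by ring, Real.rpow_add hx, hxi]
  have e3 : x^(-2*s) = (x^(2*s))⁻¹ := by
    rw [show -2*s = -(2*s) by ring, Real.rpow_neg hx.le]
  have : 0 < x^(2*s) := by positivity
  rw [e1, e2, e3]
  field_simp
  ring

lemma gfun_sub {s : ℝ} (hs : s ∈ Ioo (0:ℝ) 1) (c δ : ℝ) (hδ : 0 < δ) :
    (∫ t in Ioi δ, gfun s c t) - ∫ t in Ioi δ, gfun s 0 t = - ∫ w in Ioc 0 (δ⁻¹), hfun s c w := by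
  rw [← integral_sub (gfun_integrableOn hs c δ hδ) (gfun_integrableOn hs 0 δ hδ)]
  have h := integral_comp_rpow_Ioi ((Ioi δ).indicator (fun t => gfun s c t - gfun s 0 t))
    (p := -1) (by norm_num)
  rw [setIntegral_indicator measurableSet_Ioi, Ioi_inter_Ioi,
    sup_eq_right.2 hδ.le] at h
  rw [← h, ← integral_neg, integral_Ioc_eq_integral_Ioo]
  have : Ioo 0 δ⁻¹ = Ioi 0 ∩ Iio δ⁻¹ := rfl
  rw [this, ← setIntegral_indicator measurableSet_Iio]
  apply setIntegral_congr_fun measurableSet_Ioi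
  intro x hx
  have hx : 0 < x := hx
  simp only [smul_eq_mul]
  have hxi : x^(-1:ℝ) = x⁻¹ := Real.rpow_neg_one x
  by_cases hd : x < δ⁻¹
  · rw [indicator_of_mem, indicator_of_mem, ← gfun_hfun s c x hx]
    · simp
    · exact hd
    · show δ < x^(-1:ℝ)
      rw [hxi]; exact (lt_inv_comm₀ hδ hx).2 hd
  · rw [indicator_of_notMem, indicator_of_notMem]
    · simp
    · exact hd
    · show ¬ δ < x^(-1:ℝ)
      rw [hxi, lt_inv_comm₀ hδ hx]; exact hd

lemma gfun_zero_bound {s : ℝ} (hs : s ∈ Ioo (0:ℝ) 1) (t : ℝ) (ht : 0 < t) (ht1 : t ≤ 1) :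
    ‖gfun s 0 t‖ ≤ 2 * t^(1-2*s) := by
  have e : gfun s 0 t = 2 * (1 - (1-t^2)^s) * t^(-1-2*s) := by
    unfold gfun
    rw [show 1 - 2*0*t-t^2 = 1-t^2 by ring, show 1 + 2*0*t-t^2 = 1-t^2 by ring,
      max_eq_left (by nlinarith)]
    ring
  have h1 : 1 - t^2 ≤ (1-t^2)^s := by
    rcases eq_or_lt_of_le (show 0 ≤ 1 - t^2 by nlinarith) with h | h
    · rw [← h]; positivity
    · conv_lhs => rw [← Real.rpow_one (1-t^2)]
      exact Real.rpow_le_rpow_of_exponent_ge h (by nlinarith) hs.2.le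
  have h2 : (1-t^2)^s ≤ 1 := Real.rpow_le_one (by nlinarith) (by nlinarith) hs.1.le
  have h3 : t^(1-2*s) = t^2 * t^(-1-2*s) := by
    rw [show 1-2*s = (2:ℕ) + (-1-2*s) by push_cast; ring, Real.rpow_add ht, Real.rpow_natCast]
  have h4 : 0 < t^(-1-2*s) := by positivity
  rw [e, h3, Real.norm_of_nonneg (mul_nonneg (by linarith) h4.le), ← mul_assoc]
  gcongr
  linarith

lemma gfun_zero_integrable {s : ℝ} (hs : s ∈ Ioo (0:ℝ) 1) : IntegrableOn (gfun s 0) (Ioi 0) := by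
  have : Ioi (0:ℝ) = Ioc 0 1 ∪ Ioi 1 := (Ioc_union_Ioi_eq_Ioi zero_le_one).symm
  rw [this]
  refine IntegrableOn.union ?_ (gfun_integrableOn hs 0 1 one_pos)
  have h := intervalIntegral.intervalIntegrable_rpow' (a := 0) (b := 1) (r := 1-2*s)
    (by linarith [hs.2])
  rw [intervalIntegrable_iff, uIoc_of_le zero_le_one] at h
  refine Integrable.mono' (h.const_mul 2) (measurable_gfun s 0).aestronglyMeasurable ?_
  refine (ae_restrict_mem measurableSet_Ioc).mono ?_
  intro t ht
  exact gfun_zero_bound hs t ht.1 ht.2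

lemma gfun_zero_tendsto {s : ℝ} (hs : s ∈ Ioo (0:ℝ) 1) :
    Tendsto (fun δ => ∫ t in Ioi δ, gfun s 0 t) (𝓝[>] 0) (𝓝 (∫ t in Ioi 0, gfun s 0 t)) := by
  have h := gfun_zero_integrable hs
  have e : ∀ δ > 0, ∫ t in Ioi δ, gfun s 0 t = ∫ t in Ioi 0, (Ioi δ).indicator (gfun s 0) t := by
    intro δ hδ
    rw [setIntegral_indicator measurableSet_Ioi, Ioi_inter_Ioi, sup_eq_right.2 hδ.le]
  have : Tendsto (fun δ => ∫ t in Ioi 0, (Ioi δ).indicator (gfun s 0) t) (𝓝[>] 0)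
      (𝓝 (∫ t in Ioi 0, gfun s 0 t)) := by
    apply tendsto_integral_filter_of_dominated_convergence (fun t => ‖gfun s 0 t‖)
    · exact Eventually.of_forall fun δ =>
        ((measurable_gfun s 0).indicator measurableSet_Ioi).aestronglyMeasurable
    · exact Eventually.of_forall fun δ => Eventually.of_forall fun t =>
        norm_indicator_le_norm_self _ _
    · exact h.norm
    · refine (ae_restrict_mem measurableSet_Ioi).mono ?_
      intro t ht
      apply tendsto_const_nhds.congr'
      have : ∀ᶠ δ in 𝓝[>] (0:ℝ), δ < t := nhdsWithin_le_nhds (eventually_lt_nhds ht)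
      filter_upwards [this] with δ hδ
      rw [indicator_of_mem (by exact hδ)]
  refine this.congr' ?_
  filter_upwards [self_mem_nhdsWithin] with δ hδ
  rw [e δ hδ]

/-- The one-dimensional Getoor identity. -/
lemma gfun_limit {s : ℝ} (hs : s ∈ Ioo (0:ℝ) 1) (C ε : ℝ) (hε : 0 < ε) :
    ∃ δ₀ > 0, ∀ δ, 0 < δ → δ < δ₀ → ∀ c, |c| ≤ C →
      |(∫ t in Ioi δ, gfun s c t) - ∫ t in Ioi 0, gfun s 0 t| ≤ ε := by
  have hs0 := hs.1
  rcases lt_or_ge C 0 with hC | hC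
  · exact ⟨1, one_pos, fun δ _ _ c hc => absurd ((abs_nonneg c).trans hc) (not_le.2 hC)⟩
  have t1 : Tendsto (fun δ:ℝ => δ⁻¹) (𝓝[>] 0) atTop := tendsto_inv_nhdsGT_zero
  have t2 : Tendsto (fun W : ℝ => 2 * s * (2 * C * (W^2/8)^(s-1) * C)) atTop (𝓝 0) := by
    have a1 : Tendsto (fun W : ℝ => W^2/8) atTop atTop :=
      (tendsto_pow_atTop two_ne_zero).atTop_div_const (by norm_num)
    have a2 := (tendsto_rpow_neg_atTop (y := 1 - s) (by linarith [hs.2])).comp a1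
    have a3 := ((a2.const_mul (2*C)).mul_const C).const_mul (2*s)
    simp only [Function.comp_def, neg_sub, mul_zero, zero_mul] at a3
    exact a3
  have f1 := (t2.comp t1).eventually (gt_mem_nhds (half_pos hε))
  have f2 := t1.eventually (eventually_ge_atTop (2*C))
  have f3 := t1.eventually (((tendsto_pow_atTop (α := ℝ) two_ne_zero)).eventually
    (eventually_ge_atTop (8*(1+C^2))))
  have f4 := (gfun_zero_tendsto hs).eventually (Metric.ball_mem_nhds _ (half_pos hε))
  have := f1.and (f2.and (f3.and f4))
  rw [eventually_nhdsWithin_iff, Metric.eventually_nhds_iff] at this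
  obtain ⟨δ₀, hδ₀, h⟩ := this
  refine ⟨δ₀, hδ₀, ?_⟩
  intro δ hδ hδlt
  obtain ⟨b1, b2, b3, b4⟩ := h (y := δ) (by simpa [abs_of_pos hδ] using hδlt) hδ
  have main : ∀ c, 0 ≤ c → c ≤ C →
      |(∫ t in Ioi δ, gfun s c t) - ∫ t in Ioi 0, gfun s 0 t| ≤ ε := by
    intro c hc hcC
    have u1 := hfun_bound hs c C δ⁻¹ hc hcC b2 b3
    have u2 := gfun_sub hs c δ hδ
    rw [Real.dist_eq] at b4
    simp only [Function.comp_apply] at b1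
    rw [← norm_neg, ← u2] at u1
    rw [Real.norm_eq_abs] at u1
    have := abs_add_le ((∫ t in Ioi δ, gfun s c t) - ∫ t in Ioi δ, gfun s 0 t)
      ((∫ t in Ioi δ, gfun s 0 t) - ∫ t in Ioi 0, gfun s 0 t)
    rw [sub_add_sub_cancel] at this
    linarith
  intro c hc
  rcases le_total 0 c with h0 | h0
  · exact main c h0 ((le_abs_self c).trans hc)
  · have := main (-c) (by linarith) ((neg_le_abs c).trans hc)
    simpa only [gfun_neg] using this


lemma polar_integral {E : Type*} [NormedAddCommGroup E] [NormedSpace ℝ E] [MeasurableSpace E]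
    [BorelSpace E] [FiniteDimensional ℝ E] (μ : Measure E) [μ.IsAddHaarMeasure] [Nontrivial E]
    (f : E → ℝ) (hf : Integrable f μ) :
    ∫ x, f x ∂μ = ∫ ω : sphere (0:E) 1, (∫ r in Ioi (0:ℝ),
      r ^ (Module.finrank ℝ E - 1) * f (r • (ω:E))) ∂μ.toSphere := by
  have h1 : ∫ x, f x ∂μ = ∫ x : ({(0)}ᶜ : Set E), f x.1 ∂(μ.comap (↑)) := by
    rw [integral_subtype_comap (measurableSet_singleton _).compl fun x ↦ f x,
        restrict_compl_singleton]
  have hintg : Integrable (fun x : ({(0)}ᶜ : Set E) => f x.1) (μ.comap (↑)) := by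
    have := (integrableOn_iff_comap_subtypeVal (μ := μ) (f := f)
      (measurableSet_singleton (0:E)).compl).1 hf.integrableOn
    exact this
  have mp := μ.measurePreserving_homeomorphUnitSphereProd
  let g : sphere (0:E) 1 × Ioi (0:ℝ) → ℝ := fun p => f (p.2.1 • p.1.1)
  have hg : ∀ x : ({(0)}ᶜ : Set E), g (homeomorphUnitSphereProd E x) = f x.1 := by
    intro x
    have hx : ‖x.1‖ ≠ 0 := norm_ne_zero_iff.2 x.2
    simp only [g, homeomorphUnitSphereProd_apply_fst_coe, homeomorphUnitSphereProd_apply_snd_coe]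
    rw [smul_smul, mul_inv_cancel₀ hx, one_smul]
  have hme := (homeomorphUnitSphereProd E).measurableEmbedding
  have h2 := mp.integral_comp hme g
  have hi : Integrable g (μ.toSphere.prod (.volumeIoiPow (Module.finrank ℝ E - 1))) := by
    rw [← mp.integrable_comp_emb hme]
    refine hintg.congr (Eventually.of_forall fun x => ?_)
    exact (hg x).symm
  simp only [hg] at h2
  rw [h1, h2, integral_prod g hi]
  congr 1; ext ω
  simp only [Measure.volumeIoiPow, ENNReal.ofReal]
  rw [integral_withDensity_eq_integral_smul]
  · rw [integral_subtype_comap measurableSet_Ioi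
      fun a ↦ Real.toNNReal (a ^ (Module.finrank ℝ E - 1)) • f (a • ω.1)]
    apply setIntegral_congr_fun measurableSet_Ioi
    intro x hx
    simp only []
    rw [NNReal.smul_def, Real.coe_toNNReal _ (pow_nonneg hx.out.le _), smul_eq_mul]
  · exact (measurable_subtype_coe.pow_const _).real_toNNReal

abbrev EE (n : ℕ) := EuclideanSpace ℝ (Fin n)

lemma kernel_integrable {n : ℕ} {s : ℝ} (hs : s ∈ Ioo (0:ℝ) 1) (δ : ℝ) (hδ : 0 < δ)
    (u : EE n → ℝ) (hu : Continuous u) (M : ℝ) (hM : ∀ y, |u y| ≤ M) (A : ℝ) :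
    Integrable ({z : EE n | δ < ‖z‖}.indicator (fun z => (A - u z) / ‖z‖ ^ ((n:ℝ) + 2*s))) := by
  have h0 := integrable_one_add_norm (E := EE n) (μ := volume) (r := (n:ℝ) + 2*s)
    (by simp; linarith [hs.1])
  have hr : 0 ≤ (n:ℝ) + 2*s := by have := hs.1; positivity
  have hset : MeasurableSet {z : EE n | δ < ‖z‖} := measurableSet_lt measurable_const measurable_norm
  have hMA : 0 ≤ |A| + M := add_nonneg (abs_nonneg _) ((abs_nonneg _).trans (hM 0))
  refine Integrable.mono' (h0.const_mul ((|A| + M) * (1+δ⁻¹)^((n:ℝ)+2*s))) ?_ ?_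
  · refine Measurable.aestronglyMeasurable (Measurable.indicator ?_ hset)
    have := hu.measurable
    fun_prop
  · refine Eventually.of_forall fun z => ?_
    by_cases hz : z ∈ {z : EE n | δ < ‖z‖}
    · rw [indicator_of_mem hz]
      have hz0 : 0 < ‖z‖ := hδ.trans hz
      have hz' : δ < ‖z‖ := hz
      rw [norm_div, Real.norm_of_nonneg (by positivity : 0 ≤ ‖z‖ ^ ((n:ℝ)+2*s)), mul_assoc,
        div_eq_mul_inv]
      gcongr
      · rw [Real.norm_eq_abs]
        exact (abs_sub _ _).trans (by linarith [hM z])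
      · rw [← Real.inv_rpow hz0.le, Real.rpow_neg (by positivity), ← Real.inv_rpow (by positivity),
          ← Real.mul_rpow (by positivity) (by positivity)]
        gcongr
        rw [← div_eq_mul_inv, le_div_iff₀ (by positivity), inv_mul_le_iff₀ hz0]
        have : 1 ≤ ‖z‖ * δ⁻¹ := by
          rw [← div_eq_mul_inv, one_le_div hδ]; exact hz'.le
        linarith
    · rw [indicator_of_notMem hz, norm_zero]
      positivity

noncomputable def Qf {n : ℕ} (a : ℝ) (b : EE n) (x : EE n) : ℝ := a + inner ℝ b x - ‖x‖^2

noncomputable def Uf {n : ℕ} (s a : ℝ) (b : EE n) (x : EE n) : ℝ := (max (Qf a b x) 0)^s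

lemma Qf_continuous {n : ℕ} (a : ℝ) (b : EE n) : Continuous (Qf a b) := by
  unfold Qf; fun_prop

lemma Uf_continuous {n : ℕ} {s : ℝ} (hs : s ∈ Ioo (0:ℝ) 1) (a : ℝ) (b : EE n) :
    Continuous (Uf s a b) := by
  unfold Uf
  exact ((Qf_continuous a b).max continuous_const).rpow_const fun _ => Or.inr hs.1.le

lemma Qf_add {n : ℕ} (a : ℝ) (b x z : EE n) :
    Qf a b (x + z) = Qf a b x + inner ℝ (b - (2:ℝ) • x) z - ‖z‖^2 := by
  unfold Qf
  rw [inner_add_right, inner_sub_left, real_inner_smul_left, norm_add_sq_real]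
  ring

lemma Qf_le {n : ℕ} (a : ℝ) (b x : EE n) : Qf a b x ≤ |a| + ‖b‖^2 := by
  unfold Qf
  have := real_inner_le_norm b x
  nlinarith [sq_nonneg (‖x‖ - ‖b‖), sq_nonneg (‖x‖), sq_nonneg (‖b‖), le_abs_self a]

lemma Uf_bdd {n : ℕ} {s : ℝ} (hs : s ∈ Ioo (0:ℝ) 1) (a : ℝ) (b x : EE n) :
    |Uf s a b x| ≤ (|a| + ‖b‖^2)^s := by
  unfold Uf
  rw [abs_of_nonneg (by positivity)]
  exact Real.rpow_le_rpow (le_max_right _ _) (max_le (Qf_le a b x) (by positivity)) hs.1.le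



/-- Inner radial integral. -/
lemma radial {n : ℕ} {s : ℝ} (a : ℝ) (b x ω : EE n)
    (hω : ‖ω‖ = 1) (hQ : 0 < Qf a b x) (δ : ℝ) (hδ : 0 < δ) :
    ∫ r in Ioi δ, (2 * Uf s a b x - Uf s a b (x + r • ω) - Uf s a b (x + (-r) • ω)) * r^(-1-2*s) =
      ∫ t in Ioi (δ / √(Qf a b x)), gfun s (inner ℝ (b - (2:ℝ) • x) ω / (2*√(Qf a b x))) t := by
  set R := √(Qf a b x) with hR
  have hR0 : 0 < R := Real.sqrt_pos.2 hQ
  have hRR : Qf a b x = R^2 := (Real.sq_sqrt hQ.le).symm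
  have h1 := integral_comp_mul_left_Ioi (fun r => (2 * Uf s a b x - Uf s a b (x + r • ω) - Uf s a b (x + (-r) • ω)) * r^(-1-2*s)) (δ/R) hR0
  rw [mul_div_cancel₀ _ hR0.ne', smul_eq_mul, eq_inv_mul_iff_mul_eq₀ hR0.ne'] at h1
  rw [← h1, ← integral_const_mul]
  refine setIntegral_congr_fun measurableSet_Ioi fun t ht => ?_
  have ht0 : 0 < t := (div_pos hδ hR0).trans ht
  set d := inner ℝ (b - (2:ℝ) • x) ω with hd
  have key : ∀ c : ℝ, c^2 = 1 → Uf s a b (x + (c * (R*t)) • ω) = R^(2*s) * (max (1 + 2*(d/(2*R))*t*c - t^2) 0)^s := by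
    intro c hc
    unfold Uf
    rw [Qf_add, hRR, real_inner_smul_right, norm_smul, hω, mul_one, Real.norm_eq_abs, sq_abs, ← hd]
    have : R^2 + c * (R*t) * d - (c*(R*t))^2 = R^2 * (1 + 2*(d/(2*R))*t*c - t^2) := by
      field_simp
      linear_combination (-R*t^2)*hc
    rw [this]
    have h2 : max (R^2 * (1 + 2*(d/(2*R))*t*c - t^2)) 0 = R^2 * max (1 + 2*(d/(2*R))*t*c - t^2) 0 := by
      rw [mul_max_of_nonneg _ _ (by positivity), mul_zero]
    rw [h2, Real.mul_rpow (by positivity) (le_max_right _ _), Real.rpow_mul hR0.le]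
    norm_num
  have k1 := key 1 (by norm_num)
  have k2 := key (-1) (by norm_num)
  rw [one_mul] at k1
  rw [neg_one_mul] at k2
  have k0 : Uf s a b x = R^(2*s) := by
    unfold Uf
    rw [max_eq_left hQ.le, hRR, Real.rpow_mul hR0.le]; norm_num
  rw [k0, k1, k2, Real.mul_rpow hR0.le ht0.le]
  have h3 : R * (R^(2*s) * R^(-1-2*s)) = 1 := by
    rw [← Real.rpow_add hR0]
    have : 2*s + (-1-2*s) = -1 := by ring
    rw [this, Real.rpow_neg_one]; field_simp
  unfold gfun
  have e1 : 1 + 2 * (d / (2 * R)) * t * 1 - t ^ 2 = 1 + 2 * (d / (2 * R)) * t - t ^ 2 := by ring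
  have e2 : 1 + 2 * (d / (2 * R)) * t * (-1) - t ^ 2 = 1 - 2 * (d / (2 * R)) * t - t ^ 2 := by ring
  rw [e1, e2]
  linear_combination ((2 - (max (1 - 2 * (d / (2 * R)) * t - t ^ 2) 0)^s - (max (1 + 2 * (d / (2 * R)) * t - t ^ 2) 0)^s) * t^(-1-2*s)) * h3

lemma pv_eq {n : ℕ} (hn : 1 ≤ n) {s : ℝ} (hs : s ∈ Ioo (0:ℝ) 1) (a : ℝ) (b x : EE n)
    (hQ : 0 < Qf a b x) (δ : ℝ) (hδ : 0 < δ) :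
    ∫ y in {y : EE n | δ < ‖y - x‖}, (Uf s a b x - Uf s a b y) / ‖x - y‖ ^ ((n : ℝ) + 2 * s) =
    (1/2) * ∫ ω : sphere (0:EE n) 1, (∫ t in Ioi (δ / √(Qf a b x)), 
      gfun s (inner ℝ (b - (2:ℝ) • x) (ω : EE n) / (2*√(Qf a b x))) t) ∂((volume : Measure (EE n)).toSphere) := by
  have : Nonempty (Fin n) := ⟨⟨0, hn⟩⟩
  have hset : ∀ x, MeasurableSet {z : EE n | δ < ‖z - x‖} := fun x =>
    measurableSet_lt measurable_const (measurable_norm.comp (measurable_id.sub_const x))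
  set F : EE n → ℝ := {z : EE n | δ < ‖z‖}.indicator
    (fun z => (Uf s a b x - Uf s a b (x+z)) / ‖z‖ ^ ((n:ℝ) + 2*s)) with hF
  have hFi : Integrable F := kernel_integrable hs δ hδ (fun z => Uf s a b (x+z))
    ((Uf_continuous hs a b).comp (by fun_prop)) _ (fun y => Uf_bdd hs a b _) _
  have h1 : ∫ y in {y : EE n | δ < ‖y - x‖}, (Uf s a b x - Uf s a b y) / ‖x - y‖ ^ ((n : ℝ) + 2 * s)
      = ∫ z, F z := by
    rw [← integral_indicator (hset x), ← integral_add_left_eq_self _ x]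
    congr 1; ext z
    simp only [hF, indicator, mem_ofPred_eq, add_sub_cancel_left, sub_add_cancel_left, norm_neg]
  have h2 : ∫ z, F z = (1/2) * ∫ z, (F z + F (-z)) := by
    rw [integral_add hFi hFi.comp_neg, integral_neg_eq_self F]; ring
  rw [h1, h2, polar_integral _ (fun z => F z + F (-z)) (hFi.add hFi.comp_neg)]
  congr 2; ext ω
  have hω : ‖(ω : EE n)‖ = 1 := by simp
  rw [← radial a b x ω hω hQ δ hδ, ← integral_indicator measurableSet_Ioi,
    ← integral_indicator measurableSet_Ioi]
  congr 1; ext r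
  by_cases hr : δ < r
  · have hr0 : 0 < r := hδ.trans hr
    have hnr : ‖r • (ω : EE n)‖ = r := by rw [norm_smul, hω, mul_one, Real.norm_of_nonneg hr0.le]
    have hm1 : r • (ω : EE n) ∈ {z : EE n | δ < ‖z‖} := by simpa [hnr] using hr
    have hm2 : -(r • (ω : EE n)) ∈ {z : EE n | δ < ‖z‖} := by simpa [hnr] using hr
    rw [indicator_of_mem (show r ∈ Ioi 0 from hr0), indicator_of_mem (show r ∈ Ioi δ from hr)]
    simp only [hF]
    rw [indicator_of_mem hm1, indicator_of_mem hm2, norm_neg, hnr, ← add_div, finrank_euclideanSpace_fin,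
      neg_smul]
    have : r^(-1-2*s) = r^(n-1) / r^((n:ℝ)+2*s) := by
      rw [← Real.rpow_natCast, ← Real.rpow_sub hr0, Nat.cast_sub hn]
      congr 1; push_cast; ring
    rw [this]; ring
  · rw [indicator_of_notMem (show r ∉ Ioi δ from hr)]
    by_cases hr0 : 0 < r
    · have hnr : ‖r • (ω : EE n)‖ = r := by rw [norm_smul, hω, mul_one, Real.norm_of_nonneg hr0.le]
      have hm1 : r • (ω : EE n) ∉ {z : EE n | δ < ‖z‖} := by simpa [hnr] using hr
      have hm2 : -(r • (ω : EE n)) ∉ {z : EE n | δ < ‖z‖} := by simpa [hnr] using hr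
      rw [indicator_of_mem (show r ∈ Ioi 0 from hr0)]
      simp only [hF]
      rw [indicator_of_notMem hm1, indicator_of_notMem hm2]; simp
    · rw [indicator_of_notMem (show r ∉ Ioi 0 from hr0)]

noncomputable def kap (n : ℕ) (s : ℝ) : ℝ :=
  (1/2) * ((volume : Measure (EE n)).toSphere.real univ * ∫ t in Ioi (0:ℝ), gfun s 0 t)

lemma pv_limit {n : ℕ} (hn : 1 ≤ n) {s : ℝ} (hs : s ∈ Ioo (0:ℝ) 1) (a : ℝ) (b x : EE n)
    (hQ : 0 < Qf a b x) :
    Tendsto (fun δ : ℝ => ∫ y in {y : EE n | δ < ‖y - x‖},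
      (Uf s a b x - Uf s a b y) / ‖x - y‖ ^ ((n : ℝ) + 2 * s)) (𝓝[>] 0) (𝓝 (kap n s)) := by
  set R := √(Qf a b x) with hR
  have hR0 : 0 < R := Real.sqrt_pos.2 hQ
  set m := (volume : Measure (EE n)).toSphere.real univ with hm
  have hm0 : 0 ≤ m := measureReal_nonneg
  rw [Metric.tendsto_nhds]
  intro ε hε
  obtain ⟨δ₀, hδ₀, h⟩ := gfun_limit hs (‖b - (2:ℝ) • x‖ / (2*R)) (ε / (m+1)) (by positivity)
  have : Ioo 0 (δ₀ * R) ∈ 𝓝[>] (0:ℝ) := Ioo_mem_nhdsGT (by positivity)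
  filter_upwards [this] with δ hδ
  rw [pv_eq hn hs a b x hQ δ hδ.1, ← hR, kap, ← smul_eq_mul (_root_.MeasureTheory.Measure.real _ _), 
    ← integral_const, dist_eq_norm, ← mul_sub]
  have hc : ∀ ω : sphere (0:EE n) 1, |(inner ℝ (b - (2:ℝ) • x) (ω : EE n) / (2*R))| ≤ 
      ‖b - (2:ℝ) • x‖ / (2*R) := by
    intro ω
    have hω : ‖(ω : EE n)‖ = 1 := by simp
    rw [abs_div, abs_of_pos (by positivity : 0 < 2*R)]
    gcongr
    simpa [hω] using abs_real_inner_le_norm (b - (2:ℝ) • x) (ω : EE n)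
  have hb := fun ω : sphere (0:EE n) 1 => h (δ/R) (div_pos hδ.1 hR0) ((div_lt_iff₀ hR0).2 hδ.2) _ (hc ω)
  set G : sphere (0:EE n) 1 → ℝ := fun ω => ∫ t in Ioi (δ / R), gfun s (inner ℝ (b - (2:ℝ) • x) (ω : EE n) / (2*R)) t with hG
  have hGm : Measurable G := by
    have : StronglyMeasurable (fun p : sphere (0:EE n) 1 × ℝ =>
        gfun s (inner ℝ (b - (2:ℝ) • x) (p.1 : EE n) / (2*R)) p.2) := by
      refine Measurable.stronglyMeasurable ?_
      unfold gfun
      have h1 : Measurable (fun p : sphere (0:EE n) 1 × ℝ => inner ℝ (b - (2:ℝ) • x) (p.1 : EE n) / (2*R)) :=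
        Measurable.div_const (Continuous.measurable (by fun_prop)) _
      fun_prop
    exact (this.integral_prod_right (ν := volume.restrict (Ioi (δ/R)))).measurable
  have hGi : Integrable G (volume : Measure (EE n)).toSphere := by
    refine Integrable.of_bound hGm.aestronglyMeasurable (|∫ t in Ioi (0:ℝ), gfun s 0 t| + ε/(m+1)) 
      (Eventually.of_forall fun ω => ?_)
    have := hb ω
    have h3 := abs_sub_abs_le_abs_sub (G ω) (∫ t in Ioi (0:ℝ), gfun s 0 t)
    rw [Real.norm_eq_abs]; linarith
  rw [← integral_sub hGi (integrable_const _), norm_mul]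
  have h4 := norm_integral_le_of_norm_le_const (μ := (volume : Measure (EE n)).toSphere) 
    (f := fun ω => G ω - ∫ t in Ioi (0:ℝ), gfun s 0 t) (Eventually.of_forall hb)
  have h5 : ε/(m+1)*m < ε := by
    rw [div_mul_eq_mul_div, div_lt_iff₀ (by positivity)]; nlinarith
  rw [← hm] at h4
  have h6 : ‖(1/2:ℝ)‖ = 1/2 := by norm_num
  rw [h6]
  linarith


/-- truncated integral -/
noncomputable def tI {n : ℕ} (s : ℝ) (u : EE n → ℝ) (x : EE n) (δ : ℝ) : ℝ :=
  ∫ y in {y : EE n | δ < ‖y - x‖}, (u x - u y) / ‖x - y‖ ^ ((n : ℝ) + 2 * s)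

lemma tI_integrable {n : ℕ} {s : ℝ} (hs : s ∈ Ioo (0:ℝ) 1) (δ : ℝ) (hδ : 0 < δ)
    (u : EE n → ℝ) (hu : Continuous u) (M : ℝ) (hM : ∀ y, |u y| ≤ M) (x : EE n) :
    IntegrableOn (fun y => (u x - u y) / ‖x - y‖ ^ ((n : ℝ) + 2 * s)) {y : EE n | δ < ‖y - x‖} := by
  have h := kernel_integrable hs δ hδ (fun z => u (x+z)) (hu.comp (by fun_prop)) M
    (fun y => hM _) (u x)
  have hset : MeasurableSet {z : EE n | δ < ‖z - x‖} := 
    measurableSet_lt measurable_const (measurable_norm.comp (measurable_id.sub_const x))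
  rw [← integrable_indicator_iff hset]
  have h2 := h.comp_sub_right x
  refine h2.congr (Eventually.of_forall fun y => ?_)
  simp only [indicator, mem_ofPred_eq, add_sub_cancel, norm_sub_rev x y]

structure InW (n : ℕ) (s : ℝ) (u : EE n → ℝ) : Prop where
  hold : ∃ C : ℝ, ∀ x y, |u x - u y| ≤ C * ‖x - y‖ ^ s
  supp : ∃ R : ℝ, ∀ x, R ≤ ‖x‖ → u x = 0
  cont : Continuous u
  bdd : ∃ M, ∀ y, |u y| ≤ M
  harm : ∀ x ∈ ball (0 : EE n) 1, Tendsto (tI s u x) (𝓝[>] 0) (𝓝 0)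
  smooth : ContDiffOn ℝ (⊤ : ℕ∞) u (ball (0 : EE n) 1)

lemma InW.add {n : ℕ} {s : ℝ} (hs : s ∈ Ioo (0:ℝ) 1) {u v : EE n → ℝ} (hu : InW n s u) (hv : InW n s v) :
    InW n s (fun x => u x + v x) := by
  obtain ⟨Mu, hMu⟩ := hu.bdd
  obtain ⟨Mv, hMv⟩ := hv.bdd
  refine ⟨?_, ?_, hu.cont.add hv.cont, ?_, ?_, hu.smooth.add hv.smooth⟩
  · obtain ⟨C, hC⟩ := hu.hold
    obtain ⟨D, hD⟩ := hv.hold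
    refine ⟨C + D, fun x y => ?_⟩
    have e : u x + v x - (u y + v y) = (u x - u y) + (v x - v y) := by ring
    rw [e, add_mul]
    exact (abs_add_le _ _).trans (add_le_add (hC x y) (hD x y))
  · obtain ⟨R, hR⟩ := hu.supp
    obtain ⟨S, hS⟩ := hv.supp
    exact ⟨max R S, fun x hx => by rw [hR x ((le_max_left _ _).trans hx), hS x ((le_max_right _ _).trans hx), add_zero]⟩
  · exact ⟨Mu + Mv, fun y => (abs_add_le _ _).trans (add_le_add (hMu y) (hMv y))⟩
  · intro x hx
    have := (hu.harm x hx).add (hv.harm x hx)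
    rw [add_zero] at this
    refine this.congr' ?_
    filter_upwards [self_mem_nhdsWithin] with δ hδ
    unfold tI
    rw [← integral_add (tI_integrable hs δ hδ u hu.cont Mu hMu x) (tI_integrable hs δ hδ v hv.cont Mv hMv x)]
    congr 1; ext y; ring

lemma InW.smul {n : ℕ} {s : ℝ} {u : EE n → ℝ} (c : ℝ) (hu : InW n s u) :
    InW n s (fun x => c * u x) := by
  obtain ⟨Mu, hMu⟩ := hu.bdd
  refine ⟨?_, ?_, hu.cont.const_mul c, ?_, ?_, contDiffOn_const.mul hu.smooth⟩
  · obtain ⟨C, hC⟩ := hu.hold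
    refine ⟨|c| * C, fun x y => ?_⟩
    rw [← mul_sub, abs_mul, mul_assoc]
    exact mul_le_mul_of_nonneg_left (hC x y) (abs_nonneg _)
  · obtain ⟨R, hR⟩ := hu.supp
    exact ⟨R, fun x hx => by rw [hR x hx, mul_zero]⟩
  · exact ⟨|c| * Mu, fun y => by rw [abs_mul]; exact mul_le_mul_of_nonneg_left (hMu y) (abs_nonneg _)⟩
  · intro x hx
    have := (hu.harm x hx).const_mul c
    rw [mul_zero] at this
    refine this.congr fun δ => ?_
    unfold tI
    rw [← integral_const_mul]
    congr 1; ext y; ring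

lemma InW.zero (n : ℕ) {s : ℝ} : InW n s (fun _ => 0) := by
  refine ⟨⟨0, by simp⟩, ⟨0, by simp⟩, continuous_const, ⟨0, by simp⟩, fun x _ => ?_, contDiffOn_const⟩
  have : tI s (fun _ : EE n => (0:ℝ)) x = fun _ => 0 := by ext; simp [tI]
  rw [this]; exact tendsto_const_nhds

lemma Uf_holder {n : ℕ} {s : ℝ} (hs : s ∈ Ioo (0:ℝ) 1) (a : ℝ) (b : EE n) :
    ∃ C : ℝ, ∀ x y, |Uf s a b x - Uf s a b y| ≤ C * ‖x - y‖ ^ s := by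
  set p : EE n := (1/2:ℝ) • b with hp
  set T := max (a + ‖p‖^2) 0 with hT
  set ρ := √T with hρ
  have hρ2 : ρ^2 = T := Real.sq_sqrt (le_max_right _ _)
  have hρ0 : 0 ≤ ρ := Real.sqrt_nonneg _
  have hQ : ∀ x, Qf a b x = a + ‖p‖^2 - ‖x - p‖^2 := by
    intro x
    have : b = (2:ℝ) • p := by rw [hp, smul_smul]; norm_num
    unfold Qf
    rw [norm_sub_sq_real, this, real_inner_smul_left, real_inner_comm p x]; ring
  have hm : ∀ x, max (Qf a b x) 0 = ρ^2 - (min ‖x - p‖ ρ)^2 := by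
    intro x
    rw [hQ, hρ2]
    rcases le_total ‖x - p‖ ρ with h | h
    · rw [min_eq_left h]
      have h1 : ‖x-p‖^2 ≤ T := by rw [← hρ2]; gcongr
      rcases le_total (a + ‖p‖^2) 0 with h3 | h3
      · have : T = 0 := max_eq_right h3
        rw [this] at h1 ⊢
        have : ‖x-p‖^2 = 0 := le_antisymm h1 (by positivity)
        rw [this]; simp [h3]
      · have : T = a + ‖p‖^2 := max_eq_left h3
        rw [← this, max_eq_left]; linarith
    · rw [min_eq_right h, hρ2, sub_self, max_eq_right]
      have : T ≤ ‖x-p‖^2 := by rw [← hρ2]; gcongr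
      linarith [le_max_left (a + ‖p‖^2) 0]
  have hlip : ∀ x y, max (Qf a b x) 0 ≤ max (Qf a b y) 0 + 2*ρ*‖x-y‖ := by
    intro x y
    rw [hm, hm]
    have h1 : min ‖y - p‖ ρ ≤ min ‖x - p‖ ρ + ‖x - y‖ := by
      have h2 : ‖y - p‖ ≤ ‖x - p‖ + ‖x - y‖ := by
        have := norm_sub_le (x - p) (x - y)
        rwa [sub_sub_sub_cancel_left] at this
      rcases le_total ‖x - p‖ ρ with h | h
      · rw [min_eq_left h]; exact (min_le_left _ _).trans h2
      · rw [min_eq_right h]; exact (min_le_right _ _).trans (by linarith [norm_nonneg (x-y)])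
    have h3 : min ‖y - p‖ ρ ≤ ρ := min_le_right _ _
    have h4 : min ‖x - p‖ ρ ≤ ρ := min_le_right _ _
    have h5 : 0 ≤ min ‖y - p‖ ρ := le_min (norm_nonneg _) hρ0
    have h6 : 0 ≤ min ‖x - p‖ ρ := le_min (norm_nonneg _) hρ0
    have h7 := norm_nonneg (x-y)
    nlinarith [mul_nonneg (add_nonneg h5 h6) (sub_nonneg.2 h1), mul_nonneg h7 (sub_nonneg.2 h3), mul_nonneg h7 (sub_nonneg.2 h4)]
  refine ⟨(2*ρ)^s, ?_⟩
  have key : ∀ x y, Uf s a b x ≤ Uf s a b y + (2*ρ)^s * ‖x-y‖^s := by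
    intro x y
    unfold Uf
    rw [← Real.mul_rpow (by positivity) (norm_nonneg _)]
    refine (Real.rpow_le_rpow (le_max_right _ _) (hlip x y) hs.1.le).trans ?_
    exact Real.rpow_add_le_add_rpow (le_max_right _ _) (by positivity) hs.1.le hs.2.le
  intro x y
  rw [abs_le]
  have h1 := key x y
  have h2 := key y x
  rw [norm_sub_rev] at h2
  constructor <;> linarith

lemma Qf_pos {n : ℕ} (a : ℝ) (b : EE n) (ha : 1 + ‖b‖ < a) (x : EE n) (hx : ‖x‖ ≤ 1) : 0 < Qf a b x := by
  unfold Qf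
  have h1 := abs_real_inner_le_norm b x
  have h2 := neg_abs_le (inner ℝ b x)
  nlinarith [norm_nonneg b, norm_nonneg x, mul_nonneg (norm_nonneg b) (sub_nonneg.2 hx)]

lemma Qf_contDiff {n : ℕ} (a : ℝ) (b : EE n) {m : WithTop ℕ∞} : ContDiff ℝ m (Qf a b) := by
  unfold Qf
  exact (contDiff_const.add (contDiff_const.inner ℝ contDiff_id)).sub (contDiff_norm_sq ℝ)

lemma Uf_smooth {n : ℕ} (s a : ℝ) (b : EE n) (ha : 1 + ‖b‖ < a) :
    ContDiffOn ℝ (⊤ : ℕ∞) (Uf s a b) (ball (0 : EE n) 1) := by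
  have h : ContDiffOn ℝ (⊤ : ℕ∞) (fun x => (Qf a b x)^s) (ball (0 : EE n) 1) := by
    refine (Qf_contDiff a b).contDiffOn.rpow_const_of_ne fun x hx => (Qf_pos a b ha x ?_).ne'
    simpa using (mem_ball_zero_iff.1 hx).le
  refine h.congr fun x hx => ?_
  unfold Uf
  rw [max_eq_left (Qf_pos a b ha x (mem_ball_zero_iff.1 hx).le).le]

lemma Uf_supp {n : ℕ} {s : ℝ} (hs : s ∈ Ioo (0:ℝ) 1) (a : ℝ) (b : EE n) :
    ∃ R : ℝ, ∀ x, R ≤ ‖x‖ → Uf s a b x = 0 := by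
  refine ⟨|a| + ‖b‖ + 1, fun x hx => ?_⟩
  unfold Uf
  rw [max_eq_right, Real.zero_rpow hs.1.ne']
  unfold Qf
  have h1 := real_inner_le_norm b x
  have h2 := le_abs_self a
  have h3 := abs_nonneg a
  have h4 := norm_nonneg b
  nlinarith [mul_nonneg h3 (norm_nonneg x)]

lemma InW.base {n : ℕ} (hn : 1 ≤ n) {s : ℝ} (hs : s ∈ Ioo (0:ℝ) 1) (a a' : ℝ) (b : EE n)
    (ha : 1 + ‖b‖ < a) (ha' : 1 + ‖b‖ < a') (c : ℝ) :
    InW n s (fun x => c * (Uf s a b x - Uf s a' b x)) := by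
  refine InW.smul c ?_
  refine ⟨?_, ?_, (Uf_continuous hs a b).sub (Uf_continuous hs a' b), ?_, ?_, (Uf_smooth s a b ha).sub (Uf_smooth s a' b ha')⟩
  · obtain ⟨C, hC⟩ := Uf_holder hs a b
    obtain ⟨D, hD⟩ := Uf_holder hs a' b
    refine ⟨C + D, fun x y => ?_⟩
    have e : Uf s a b x - Uf s a' b x - (Uf s a b y - Uf s a' b y) = (Uf s a b x - Uf s a b y) - (Uf s a' b x - Uf s a' b y) := by ring
    rw [e, add_mul]
    exact (abs_sub _ _).trans (add_le_add (hC x y) (hD x y))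
  · obtain ⟨R, hR⟩ := Uf_supp hs a b
    obtain ⟨S, hS⟩ := Uf_supp hs a' b
    exact ⟨max R S, fun x hx => by rw [hR x ((le_max_left _ _).trans hx), hS x ((le_max_right _ _).trans hx), sub_zero]⟩
  · exact ⟨_, fun y => (abs_sub _ _).trans (add_le_add (Uf_bdd hs a b y) (Uf_bdd hs a' b y))⟩
  · intro x hx
    have hx' := (mem_ball_zero_iff.1 hx).le
    have := (pv_limit hn hs a b x (Qf_pos a b ha x hx')).sub (pv_limit hn hs a' b x (Qf_pos a' b ha' x hx'))
    rw [sub_self] at this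
    refine this.congr' ?_
    filter_upwards [self_mem_nhdsWithin] with δ hδ
    unfold tI
    rw [← integral_sub (tI_integrable hs δ hδ _ (Uf_continuous hs a b) _ (Uf_bdd hs a b) x) (tI_integrable hs δ hδ _ (Uf_continuous hs a' b) _ (Uf_bdd hs a' b) x)]
    congr 1; ext y; ring


/-- iterated directional derivatives -/
noncomputable def dd {V : Type*} [NormedAddCommGroup V] [NormedSpace ℝ V] :
    List V → (V → ℝ) → V → ℝ
  | [], g => g
  | v :: l, g => fun x => fderiv ℝ (dd l g) x v

section dd
variable {V : Type*} [NormedAddCommGroup V] [NormedSpace ℝ V]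

lemma dd_congr (l : List V) {g h : V → ℝ} {x : V} (hgh : g =ᶠ[𝓝 x] h) : dd l g =ᶠ[𝓝 x] dd l h := by
  induction l with
  | nil => exact hgh
  | cons v l ih => exact ih.fderiv.mono fun y hy => by simp only [dd]; rw [hy]

lemma dd_contDiffAt (l : List V) {g : V → ℝ} {x : V} {N m : WithTop ℕ∞} (hg : ContDiffAt ℝ N g x)
    (hm : m + l.length ≤ N) : ContDiffAt ℝ m (dd l g) x := by
  induction l generalizing m with
  | nil => exact hg.of_le (by simpa using hm)
  | cons v l ih =>
    have h1 : ContDiffAt ℝ (m+1) (dd l g) x := ih (by 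
      refine le_trans (le_of_eq ?_) hm
      rw [List.length_cons]; push_cast; rw [add_assoc, add_comm 1])
    exact (h1.fderiv_right le_rfl).clm_apply contDiffAt_const

lemma top_add_nat (k : ℕ) : (((⊤:ℕ∞) : WithTop ℕ∞) + (k:WithTop ℕ∞)) ≤ ((⊤:ℕ∞) : WithTop ℕ∞) := by
  have : ((k : ℕ∞) : WithTop ℕ∞) = (k : WithTop ℕ∞) := by norm_cast
  rw [← this, ← WithTop.coe_add, top_add]

lemma dd_contDiffOn (l : List V) {g : V → ℝ} {U : Set V} (hU : IsOpen U) 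
    (hg : ContDiffOn ℝ (⊤:ℕ∞) g U) : ContDiffOn ℝ (⊤:ℕ∞) (dd l g) U := fun x hx =>
  (dd_contDiffAt l (hg.contDiffAt (hU.mem_nhds hx)) (top_add_nat _)).contDiffWithinAt

lemma dd_differentiableAt (l : List V) {g : V → ℝ} {U : Set V} (hU : IsOpen U) 
    (hg : ContDiffOn ℝ (⊤:ℕ∞) g U) {x : V} (hx : x ∈ U) : DifferentiableAt ℝ (dd l g) x :=
  ((dd_contDiffOn l hU hg).contDiffAt (hU.mem_nhds hx)).differentiableAt (by simp)

lemma dd_add (l : List V) {g h : V → ℝ} {U : Set V} (hU : IsOpen U) 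
    (hg : ContDiffOn ℝ (⊤:ℕ∞) g U) (hh : ContDiffOn ℝ (⊤:ℕ∞) h U) :
    ∀ x ∈ U, dd l (fun x => g x + h x) x = dd l g x + dd l h x := by
  induction l with
  | nil => intro x _; rfl
  | cons v l ih =>
    intro x hx
    have : dd l (fun x => g x + h x) =ᶠ[𝓝 x] fun y => dd l g y + dd l h y := by
      filter_upwards [hU.mem_nhds hx] with y hy using ih y hy
    simp only [dd]
    rw [this.fderiv_eq, fderiv_fun_add (dd_differentiableAt l hU hg hx) (dd_differentiableAt l hU hh hx)]
    rfl

lemma dd_smul (l : List V) (c : ℝ) {g : V → ℝ} {U : Set V} (hU : IsOpen U) 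
    (hg : ContDiffOn ℝ (⊤:ℕ∞) g U) :
    ∀ x ∈ U, dd l (fun x => c * g x) x = c * dd l g x := by
  induction l with
  | nil => intro x _; rfl
  | cons v l ih =>
    intro x hx
    have : dd l (fun x => c * g x) =ᶠ[𝓝 x] fun y => c * dd l g y := by
      filter_upwards [hU.mem_nhds hx] with y hy using ih y hy
    simp only [dd]
    rw [this.fderiv_eq, fderiv_const_mul (dd_differentiableAt l hU hg hx)]
    rfl

lemma dd_slice (l : List V) {H : ℝ × V → ℝ} {W : Set (ℝ × V)} (hW : IsOpen W) 
    (hH : ContDiffOn ℝ (⊤:ℕ∞) H W) (t : ℝ) :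
    ∀ x, (t, x) ∈ W → dd l (fun x => H (t, x)) x = dd (l.map fun v => ((0:ℝ), v)) H (t, x) := by
  induction l with
  | nil => intro x _; rfl
  | cons v l ih =>
    intro x hx
    have : dd l (fun x => H (t, x)) =ᶠ[𝓝 x] fun y => dd (l.map fun v => ((0:ℝ), v)) H (t, y) := by
      have hc : Continuous (fun y : V => (t, y)) := by fun_prop
      filter_upwards [(hW.preimage hc).mem_nhds hx] with y hy using ih y hy
    simp only [dd, List.map_cons]
    rw [this.fderiv_eq]
    have h1 := (dd_differentiableAt (l.map fun v => ((0:ℝ), v)) hW hH hx).hasFDerivAt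
    have h2 : HasFDerivAt (fun y : V => (t, y)) (ContinuousLinearMap.inr ℝ ℝ V) x := 
      hasFDerivAt_prodMk_right t x
    have h3 : HasFDerivAt (fun y => dd (l.map fun v => ((0:ℝ), v)) H (t, y)) _ x := h1.comp x h2
    rw [h3.fderiv]
    rfl

end dd

noncomputable def pd {n : ℕ} (l : List (Fin n)) : (EE n → ℝ) → EE n → ℝ := 
  dd (l.map fun i => EuclideanSpace.single i 1)

structure AA (n : ℕ) (s : ℝ) (k : ℕ) (g : EE n → ℝ) : Prop where
  smooth : ContDiffOn ℝ (⊤:ℕ∞) g (ball (0 : EE n) 1)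
  appr : ∀ ε > 0, ∃ u, InW n s u ∧ ∀ l : List (Fin n), l.length ≤ k → ∀ x ∈ ball (0 : EE n) 1,
    |pd l u x - pd l g x| ≤ ε

lemma AA.of_InW {n : ℕ} {s : ℝ} {k : ℕ} {u : EE n → ℝ} (hu : InW n s u) : AA n s k u :=
  ⟨hu.smooth, fun ε hε => ⟨u, hu, fun l _ x _ => by simpa using hε.le⟩⟩

lemma AA.congr {n : ℕ} {s : ℝ} {k : ℕ} {g h : EE n → ℝ} (hg : AA n s k g) 
    (hgh : ∀ x ∈ ball (0 : EE n) 1, h x = g x) : AA n s k h := by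
  refine ⟨hg.smooth.congr hgh, fun ε hε => ?_⟩
  obtain ⟨u, hu, h1⟩ := hg.appr ε hε
  refine ⟨u, hu, fun l hl x hx => ?_⟩
  have : pd l h x = pd l g x := by
    refine (dd_congr _ ?_).eq_of_nhds
    filter_upwards [isOpen_ball.mem_nhds hx] with y hy using hgh y hy
  rw [this]; exact h1 l hl x hx

lemma AA.add {n : ℕ} {s : ℝ} (hs : s ∈ Ioo (0:ℝ) 1) {k : ℕ} {g h : EE n → ℝ} (hg : AA n s k g) 
    (hh : AA n s k h) : AA n s k (fun x => g x + h x) := by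
  refine ⟨hg.smooth.add hh.smooth, fun ε hε => ?_⟩
  obtain ⟨u, hu, h1⟩ := hg.appr (ε/2) (half_pos hε)
  obtain ⟨v, hv, h2⟩ := hh.appr (ε/2) (half_pos hε)
  refine ⟨_, hu.add hs hv, fun l hl x hx => ?_⟩
  unfold pd at *
  rw [dd_add _ isOpen_ball hu.smooth hv.smooth x hx, dd_add _ isOpen_ball hg.smooth hh.smooth x hx]
  have a1 := abs_le.1 (h1 l hl x hx)
  have a2 := abs_le.1 (h2 l hl x hx)
  rw [abs_le]
  constructor <;> linarith

lemma AA.smul {n : ℕ} {s : ℝ} {k : ℕ} {g : EE n → ℝ} (c : ℝ) (hg : AA n s k g) :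
    AA n s k (fun x => c * g x) := by
  refine ⟨contDiffOn_const.mul hg.smooth, fun ε hε => ?_⟩
  obtain ⟨u, hu, h1⟩ := hg.appr (ε/(|c|+1)) (by positivity)
  refine ⟨_, hu.smul c, fun l hl x hx => ?_⟩
  unfold pd at *
  rw [dd_smul _ c isOpen_ball hu.smooth x hx, dd_smul _ c isOpen_ball hg.smooth x hx, ← mul_sub, abs_mul]
  refine (mul_le_mul_of_nonneg_left (h1 l hl x hx) (abs_nonneg c)).trans ?_
  rw [mul_div_assoc', div_le_iff₀ (by positivity)]
  nlinarith [abs_nonneg c]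

lemma AA.zero {n : ℕ} {s : ℝ} {k : ℕ} : AA n s k (fun _ => 0) := AA.of_InW (InW.zero n)

lemma AA.sum {n : ℕ} {s : ℝ} (hs : s ∈ Ioo (0:ℝ) 1) {k : ℕ} {ι : Type*} (S : Finset ι) 
    (g : ι → EE n → ℝ) (hg : ∀ i ∈ S, AA n s k (g i)) : AA n s k (fun x => ∑ i ∈ S, g i x) := by
  classical
  induction S using Finset.induction_on with
  | empty => simpa using AA.zero
  | insert a S ha ih =>
    have := (hg a (Finset.mem_insert_self _ _)).add hs (ih fun i hi => hg i (Finset.mem_insert_of_mem hi))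
    simpa only [Finset.sum_insert ha] using this

lemma AA.limit {n : ℕ} {s : ℝ} {k : ℕ} {H : ℝ × EE n → ℝ} {W : Set (ℝ × EE n)} (hW : IsOpen W)
    (h0 : ∀ x ∈ closedBall (0:EE n) 1, ((0:ℝ), x) ∈ W)
    (hH : ContDiffOn ℝ (⊤:ℕ∞) H W) (hA : ∀ᶠ t in 𝓝[>] (0:ℝ), AA n s k (fun x => H (t, x))) :
    AA n s k (fun x => H (0, x)) := by
  refine ⟨?_, fun ε hε => ?_⟩
  · have : ContDiff ℝ (⊤:ℕ∞) (fun x : EE n => ((0:ℝ), x)) := contDiff_const.prodMk contDiff_id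
    exact hH.comp this.contDiffOn fun x hx => h0 x (ball_subset_closedBall hx)
  · have hK : IsCompact (closedBall (0:EE n) 1) := isCompact_closedBall _ _
    have e1 : ∀ᶠ t in 𝓝 (0:ℝ), ∀ x ∈ closedBall (0:EE n) 1, (t, x) ∈ W := 
      hK.eventually_forall_of_forall_eventually fun x hx => hW.mem_nhds (h0 x hx)
    have e2 : ∀ l : List (Fin n), ∀ᶠ t in 𝓝 (0:ℝ), ∀ x ∈ closedBall (0:EE n) 1, 
        |dd ((l.map fun i => EuclideanSpace.single i (1:ℝ)).map fun v => ((0:ℝ), v)) H (t, x) - 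
        dd ((l.map fun i => EuclideanSpace.single i (1:ℝ)).map fun v => ((0:ℝ), v)) H (0, x)| < ε/2 := by
      intro l
      refine hK.eventually_forall_of_forall_eventually fun x hx => ?_
      set G := dd ((l.map fun i => EuclideanSpace.single i (1:ℝ)).map fun v => ((0:ℝ), v)) H with hG
      have hc : ContinuousAt G (0, x) := (dd_differentiableAt _ hW hH (h0 x hx)).continuousAt
      have hc2 : ContinuousAt (fun z : ℝ × EE n => G (0, z.2)) (0, x) := by
        refine ContinuousAt.comp (f := fun z : ℝ × EE n => ((0:ℝ), z.2)) (g := G) ?_ ?_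
        · exact hc
        · fun_prop
      have h3 : Tendsto (fun z : ℝ × EE n => |G z - G (0, z.2)|) (𝓝 (0,x)) (𝓝 |G (0,x) - G (0, x)|) := 
        (hc.sub hc2).abs
      rw [sub_self, abs_zero] at h3
      exact h3.eventually (gt_mem_nhds (half_pos hε))
    have hfin : {l : List (Fin n) | l.length ≤ k}.Finite := List.finite_length_le _ _
    have e3 : ∀ᶠ t in 𝓝 (0:ℝ), ∀ l ∈ {l : List (Fin n) | l.length ≤ k}, ∀ x ∈ closedBall (0:EE n) 1, 
        |dd ((l.map fun i => EuclideanSpace.single i (1:ℝ)).map fun v => ((0:ℝ), v)) H (t, x) - 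
        dd ((l.map fun i => EuclideanSpace.single i (1:ℝ)).map fun v => ((0:ℝ), v)) H (0, x)| < ε/2 := 
      (eventually_all_finite hfin).2 fun l _ => e2 l
    obtain ⟨t, ⟨ht1, ht3⟩, htA⟩ := (((e1.and e3).filter_mono nhdsWithin_le_nhds).and hA).exists
    obtain ⟨u, hu, h1⟩ := htA.appr (ε/2) (half_pos hε)
    refine ⟨u, hu, fun l hl x hx => ?_⟩
    have hx' := ball_subset_closedBall hx
    have a1 := h1 l hl x hx
    have a2 := ht3 l hl x hx'
    unfold pd at *
    rw [dd_slice _ hW hH t x (ht1 x hx')] at a1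
    rw [dd_slice _ hW hH 0 x (h0 x hx')]
    have a1 := abs_le.1 a1
    have a2 := abs_lt.1 a2
    rw [abs_le]
    constructor <;> linarith


lemma choose_ne_zero' {s : ℝ} (hs : s ∈ Ioo (0:ℝ) 1) (j : ℕ) : Ring.choose s j ≠ 0 := by
  have h : (descPochhammer ℤ j).smeval s ≠ 0 := by
    induction j with
    | zero => simp
    | succ j ih =>
      rw [descPochhammer_succ_right, Polynomial.smeval_mul]
      refine mul_ne_zero ih ?_
      have : (Polynomial.X - (j : Polynomial ℤ)).smeval s = s - j := by
        simp [Polynomial.smeval_sub, Polynomial.smeval_natCast]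
      rw [this, sub_ne_zero]
      rintro rfl
      have h1 : 0 < j := by exact_mod_cast hs.1
      have h2 : j < 1 := by exact_mod_cast hs.2
      omega
  intro h0
  rw [Ring.descPochhammer_eq_factorial_smul_choose, h0] at h
  simp at h

lemma psi_exists {s : ℝ} (hs : s ∈ Ioo (0:ℝ) 1) : ∃ (c : ℕ → ℝ) (ψ : ℕ → ℝ → ℝ),
    (∀ j, c j ≠ 0) ∧ (∀ j, AnalyticAt ℝ (ψ j) 0) ∧ (∀ j, ψ j 0 = c j) ∧
    (∀ j z, ψ j z = c j + z * ψ (j+1) z) ∧ (∀ z, ψ 0 z = (1+z)^s - 2^s * (1+z/2)^s) := by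
  set F : ℕ → ℝ → ℝ := fun j => (Function.swap dslope 0)^[j] (fun x : ℝ => (1+x)^s) with hF
  have h0 : HasFPowerSeriesAt (fun x : ℝ => (1 + x) ^ s) (binomialSeries ℝ s) 0 := Real.one_add_rpow_hasFPowerSeriesAt_zero
  have h1 : ∀ j, HasFPowerSeriesAt (F j) (FormalMultilinearSeries.fslope^[j] (binomialSeries ℝ s)) 0 := fun j =>
    h0.has_fpower_series_iterate_dslope_fslope j
  have h2 : ∀ j, F j 0 = Ring.choose s j := by
    intro j
    rw [← (h1 j).coeff_zero 1]
    have := FormalMultilinearSeries.coeff_iterate_fslope (p := binomialSeries ℝ s) j 0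
    rw [zero_add] at this
    unfold FormalMultilinearSeries.coeff at this
    rw [this, binomialSeries_apply]
    have e1 : (List.ofFn (1 : Fin j → ℝ)).prod = 1 := by rw [List.prod_ofFn]; simp
    rw [e1]; simp
  have h3 : ∀ j z, F j z = Ring.choose s j + z * F (j+1) z := by
    intro j z
    have := sub_smul_dslope (F j) 0 z
    have e : F (j+1) = dslope (F j) 0 := by
      simp only [hF, Function.iterate_succ', Function.comp, Function.swap]
    rw [e, ← h2]
    simp only [sub_zero, smul_eq_mul] at this
    linarith
  have hp : (2:ℝ)^s ≠ 0 := (Real.rpow_pos_of_pos two_pos s).ne'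
  refine ⟨fun j => Ring.choose s j * (1 - 2^s * (1/2)^j), fun j z => F j z - 2^s * (1/2)^j * F j (z/2), ?_, ?_, ?_, ?_, ?_⟩
  · intro j
    refine mul_ne_zero (choose_ne_zero' hs j) ?_
    rw [sub_ne_zero]
    intro h
    have h4 : (2:ℝ)^s = 2^j := by
      rw [one_div, inv_pow, ← div_eq_mul_inv, eq_div_iff (by positivity)] at h
      linarith
    rw [← Real.rpow_natCast] at h4
    have h5 : s = j := by
      have := congrArg (Real.logb 2) h4
      rwa [Real.logb_rpow (by norm_num) (by norm_num), Real.logb_rpow (by norm_num) (by norm_num)] at this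
    have h6 : 0 < j := by have := hs.1; rw [h5] at this; exact_mod_cast this
    have h7 : j < 1 := by have := hs.2; rw [h5] at this; exact_mod_cast this
    omega
  · intro j
    have a1 : AnalyticAt ℝ (F j) 0 := (h1 j).analyticAt
    refine a1.sub (analyticAt_const.mul ?_)
    refine AnalyticAt.fun_comp (f := fun z : ℝ => z/2) (g := F j) ?_ ?_
    · simpa using a1
    · exact analyticAt_id.div_const
  · intro j
    simp only [zero_div, h2]; ring
  · intro j z
    simp only []
    rw [h3 j z, h3 j (z/2), pow_succ]; ring
  · intro z
    simp [hF]

noncomputable def qf {n : ℕ} (b x : EE n) : ℝ := inner ℝ b x - ‖x‖^2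

lemma qf_contDiff {n : ℕ} (b : EE n) {m : WithTop ℕ∞} : ContDiff ℝ m (qf b) := by
  unfold qf
  exact (contDiff_const.inner ℝ contDiff_id).sub (contDiff_norm_sq ℝ)

lemma AA.powers {n : ℕ} (hn : 1 ≤ n) {s : ℝ} (hs : s ∈ Ioo (0:ℝ) 1) (k : ℕ) (b : EE n) (j : ℕ) :
    AA n s k (fun x => qf b x ^ j) := by
  obtain ⟨c, ψ, hc, hψ, hψ0, hrec, hz⟩ := psi_exists hs
  have base : ∀ t : ℝ, 0 < t → t < 1/(1+‖b‖) → AA n s k (fun x => ψ 0 (t * qf b x)) := by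
    intro t ht ht'
    have hb : 0 < 1 + ‖b‖ := by positivity
    have h1 : 1 + ‖b‖ < 1/t := by
      rw [lt_div_iff₀ ht]; rw [lt_div_iff₀ hb] at ht'; linarith
    have h2 : 1 + ‖b‖ < 2/t := h1.trans (by gcongr; norm_num)
    refine (AA.of_InW (InW.base hn hs (1/t) (2/t) b h1 h2 (t^s))).congr fun x hx => ?_
    have hx' := (mem_ball_zero_iff.1 hx).le
    have p1 := Qf_pos _ b h1 x hx'
    have p2 := Qf_pos _ b h2 x hx'
    unfold Uf
    rw [hz, max_eq_left p1.le, max_eq_left p2.le, mul_sub, ← Real.mul_rpow ht.le p1.le,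
      ← Real.mul_rpow ht.le p2.le]
    have e1 : t * Qf (1/t) b x = 1 + t * qf b x := by
      unfold Qf qf; field_simp; ring
    have e2 : t * Qf (2/t) b x = 2 * (1 + t * qf b x/2) := by
      unfold Qf qf; field_simp; ring
    have p3 : 0 < t * Qf (2/t) b x := by positivity
    rw [e1, e2, Real.mul_rpow (by norm_num) (by rw [e2] at p3; linarith)]
  have expand : ∀ (J : ℕ) (z : ℝ), ψ 0 z = ∑ i ∈ Finset.range J, c i * z^i + z^J * ψ J z := by
    intro J z
    induction J with
    | zero => simp
    | succ J ih => rw [ih, Finset.sum_range_succ, hrec J z]; ring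
  induction j using Nat.strong_induction_on with
  | _ j ih =>
  obtain ⟨r, hr, hball⟩ := Metric.eventually_nhds_iff_ball.1 (hψ j).eventually_analyticAt
  have hsm : ContDiffOn ℝ (⊤:ℕ∞) (ψ j) (ball 0 r) := fun z hz => (hball z hz).contDiffAt.contDiffWithinAt
  set W : Set (ℝ × EE n) := {p | p.1 * qf b p.2 ∈ ball (0:ℝ) r} with hWdef
  have hinner : ContDiff ℝ (⊤:ℕ∞) (fun p : ℝ × EE n => p.1 * qf b p.2) :=
    contDiff_fst.mul ((qf_contDiff b).comp contDiff_snd)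
  have hW : IsOpen W := isOpen_ball.preimage hinner.continuous
  have key := AA.limit (s := s) (k := k) (H := fun p : ℝ × EE n => (c j)⁻¹ * (qf b p.2 ^ j * ψ j (p.1 * qf b p.2))) (W := W) hW
    (fun x _ => by simp [hWdef, hr]) 
    (contDiffOn_const.mul ((((qf_contDiff b).comp contDiff_snd).pow j).contDiffOn.mul 
      (hsm.comp hinner.contDiffOn fun p hp => hp))) ?_
  · refine key.congr fun x _ => ?_
    simp only [zero_mul]
    rw [hψ0]; field_simp [hc j]
  · have : Ioo 0 (1/(1+‖b‖)) ∈ 𝓝[>] (0:ℝ) := Ioo_mem_nhdsGT (by positivity)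
    filter_upwards [this] with t ht
    refine AA.smul _ ?_
    have h1 := (base t ht.1 ht.2).add hs (AA.sum hs (Finset.range j) (fun i x => (-(c i * t^i)) * qf b x ^ i) 
      fun i hi => (ih i (Finset.mem_range.1 hi)).smul _)
    refine (h1.smul ((t^j)⁻¹)).congr fun x _ => ?_
    have e := expand j (t * qf b x)
    have ht0 : t^j ≠ 0 := pow_ne_zero _ ht.1.ne'
    rw [eq_inv_mul_iff_mul_eq₀ ht0, e]
    simp only [mul_pow, neg_mul, Finset.sum_neg_distrib, mul_assoc]
    ring


structure MM (n : ℕ) (s : ℝ) (k : ℕ) (g : EE n → ℝ) : Prop where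
  smooth : ContDiff ℝ (⊤:ℕ∞) g
  aa : ∀ (b : EE n) (j : ℕ), AA n s k (fun x => qf b x ^ j * g x)

lemma MM.coord {n : ℕ} {s : ℝ} (hs : s ∈ Ioo (0:ℝ) 1) (k : ℕ) (e : EE n) {g : EE n → ℝ} (hg : MM n s k g) :
    MM n s k (fun x => g x * inner ℝ e x) := by
  have hB : ContDiff ℝ (⊤:ℕ∞) (fun x : EE n => inner ℝ e x) := contDiff_const.inner ℝ contDiff_id
  refine ⟨hg.smooth.mul hB, fun b j => ?_⟩
  have hinner : ContDiff ℝ (⊤:ℕ∞) (fun p : ℝ × EE n => qf b p.2 + p.1 * inner ℝ e p.2) :=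
    ((qf_contDiff b).comp contDiff_snd).add (contDiff_fst.mul (hB.comp contDiff_snd))
  have key := AA.limit (s := s) (k := k) (W := univ) 
    (H := fun p : ℝ × EE n => ((j:ℝ)+1)⁻¹ * ((∑ i ∈ Finset.range (j+1), (qf b p.2 + p.1 * inner ℝ e p.2)^i * qf b p.2 ^ (j+1-1-i)) *
      (inner ℝ e p.2 * g p.2))) isOpen_univ (fun x _ => mem_univ _) ?_ ?_
  · refine key.congr fun x _ => ?_
    simp only [zero_mul, add_zero]
    have : ∑ i ∈ Finset.range (j+1), qf b x ^ i * qf b x ^ (j+1-1-i) = ((j:ℝ)+1) * qf b x ^ j := by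
      rw [Finset.sum_congr rfl (g := fun _ => qf b x ^ j)]
      · simp
      · intro i hi
        rw [← pow_add]; congr 1
        have := Finset.mem_range.1 hi; omega
    rw [this]
    have : (j:ℝ)+1 ≠ 0 := by positivity
    field_simp
  · refine ContDiff.contDiffOn (contDiff_const.mul (ContDiff.mul ?_ ((hB.comp contDiff_snd).mul (hg.smooth.comp contDiff_snd))))
    exact ContDiff.sum fun i _ => (hinner.pow i).mul (((qf_contDiff b).comp contDiff_snd).pow _)
  · filter_upwards [self_mem_nhdsWithin] with t ht
    have ht0 : t ≠ 0 := ne_of_gt ht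
    refine AA.smul _ ?_
    have h1 := ((hg.aa (b + t • e) (j+1)).add hs ((hg.aa b (j+1)).smul (-1))).smul t⁻¹
    refine h1.congr fun x _ => ?_
    have e1 : qf (b + t • e) x = qf b x + t * inner ℝ e x := by
      unfold qf; rw [inner_add_left, real_inner_smul_left]; ring
    rw [e1]
    have e2 := (Commute.all (qf b x + t * inner ℝ e x) (qf b x)).geom_sum₂_mul (j+1)
    rw [eq_inv_mul_iff_mul_eq₀ ht0]
    linear_combination g x * e2

lemma MM.poly {n : ℕ} (hn : 1 ≤ n) {s : ℝ} (hs : s ∈ Ioo (0:ℝ) 1) (k : ℕ) (p : MvPolynomial (Fin n) ℝ) :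
    MM n s k (fun x => MvPolynomial.eval (fun i => x i) p) := by
  induction p using MvPolynomial.induction_on with
  | C a =>
    simp only [MvPolynomial.eval_C]
    refine ⟨contDiff_const, fun b j => ?_⟩
    refine ((AA.powers hn hs k b j).smul a).congr fun x _ => ?_
    ring
  | add p q hp hq =>
    refine ⟨?_, fun b j => ?_⟩
    · simpa using hp.smooth.add hq.smooth
    · refine ((hp.aa b j).add hs (hq.aa b j)).congr fun x _ => ?_
      simp only [map_add]; ring
  | mul_X p i hp =>
    have := hp.coord hs k (EuclideanSpace.single i 1)
    simpa [EuclideanSpace.inner_single_left] using this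

lemma AA.poly {n : ℕ} (hn : 1 ≤ n) {s : ℝ} (hs : s ∈ Ioo (0:ℝ) 1) (k : ℕ) (p : MvPolynomial (Fin n) ℝ) :
    AA n s k (fun x => MvPolynomial.eval (fun i => x i) p) := by
  simpa using (MM.poly hn hs k p).aa 0 0


lemma dd_compactSupport {V : Type*} [NormedAddCommGroup V] [NormedSpace ℝ V] (l : List V) {g : V → ℝ}
    (hg : HasCompactSupport g) : HasCompactSupport (dd l g) := by
  induction l with
  | nil => exact hg
  | cons v l ih => exact ih.fderiv_apply ℝ v

noncomputable def conv {n : ℕ} (K g : EE n → ℝ) : EE n → ℝ := 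
  MeasureTheory.convolution K g (ContinuousLinearMap.mul ℝ ℝ) volume

lemma conv_dd {n : ℕ} {K : EE n → ℝ} (hK : LocallyIntegrable K) {N : ℕ} {g : EE n → ℝ} 
    (hg : ContDiff ℝ N g) (hgs : HasCompactSupport g) (l : List (EE n)) (hl : l.length ≤ N) :
    dd l (conv K g) = conv K (dd l g) := by
  induction l with
  | nil => rfl
  | cons v l ih =>
    have hl' : 1 + l.length ≤ N := by rw [List.length_cons] at hl; omega
    have ih := ih (by omega)
    have h1 : ContDiff ℝ 1 (dd l g) := contDiff_iff_contDiffAt.2 fun x => 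
      dd_contDiffAt l hg.contDiffAt (by exact_mod_cast hl')
    have hs := dd_compactSupport l hgs
    ext x
    simp only [dd]
    rw [ih]
    unfold conv
    rw [(hs.hasFDerivAt_convolution_right (ContinuousLinearMap.mul ℝ ℝ) hK h1 x).fderiv,
      convolution_precompR_apply _ hK (hs.fderiv ℝ) (h1.continuous_fderiv one_ne_zero)]

noncomputable def wf {n : ℕ} (r : ℝ) (z : EE n) : ℝ := 1 - ‖z‖^2 / r^2

noncomputable def cm (n : ℕ) (r : ℝ) (m : ℕ) : ℝ := ∫ z in closedBall (0:EE n) r, wf r z ^ m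

noncomputable def Km {n : ℕ} (r : ℝ) (m : ℕ) : EE n → ℝ := 
  (closedBall (0:EE n) r).indicator fun z => (cm n r m)⁻¹ * wf r z ^ m

lemma wf_cont {n : ℕ} (r : ℝ) : Continuous (wf r : EE n → ℝ) := by unfold wf; fun_prop

lemma wf_nonneg {n : ℕ} {r : ℝ} (hr : 0 < r) {z : EE n} (hz : z ∈ closedBall (0:EE n) r) : 0 ≤ wf r z := by
  unfold wf
  rw [mem_closedBall_zero_iff] at hz
  rw [sub_nonneg, div_le_one (by positivity)]
  gcongr

lemma Km_integrable {n : ℕ} (r : ℝ) (m : ℕ) : Integrable (Km r m : EE n → ℝ) := by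
  unfold Km
  rw [integrable_indicator_iff measurableSet_closedBall]
  have := wf_cont (n := n) r
  exact (Continuous.continuousOn (by fun_prop)).integrableOn_compact (isCompact_closedBall _ _)

lemma cm_nonneg {n : ℕ} {r : ℝ} (hr : 0 < r) (m : ℕ) : 0 ≤ cm n r m :=
  setIntegral_nonneg measurableSet_closedBall fun _ hz => pow_nonneg (wf_nonneg hr hz) _

lemma peak {n : ℕ} {r : ℝ} (hr : 0 < r) (g : EE n → ℝ) (hg : Continuous g) :
    Tendsto (fun m : ℕ => (cm n r m)⁻¹ * ∫ z in closedBall (0:EE n) r, wf r z ^ m * g z) atTop (𝓝 (g 0)) := by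
  refine tendsto_setIntegral_pow_smul_of_unique_maximum_of_isCompact_of_continuousOn (μ := volume)
    (isCompact_closedBall (0:EE n) r) (wf_cont r).continuousOn ?_ (fun z hz => wf_nonneg hr hz) ?_ ?_ hg.continuousOn
  · intro y _ hy
    unfold wf
    have : 0 < ‖y‖ := norm_pos_iff.2 hy
    have : 0 < ‖y‖^2/r^2 := by positivity
    simp only [norm_zero]; norm_num; linarith
  · simp [wf]
  · refine subset_closure (mem_interior.2 ⟨ball 0 r, ball_subset_closedBall, isOpen_ball, mem_ball_self hr⟩)

lemma Km_one {n : ℕ} {r : ℝ} (hr : 0 < r) : ∀ᶠ m in atTop, ∫ z, (Km r m : EE n → ℝ) z = 1 := by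
  have h := peak (n := n) hr (fun _ => 1) continuous_const
  simp only [mul_one] at h
  have h2 := h.eventually (lt_mem_nhds (show (1/2:ℝ) < 1 by norm_num))
  filter_upwards [h2] with m hm
  unfold Km
  rw [integral_indicator measurableSet_closedBall, integral_const_mul]
  change (cm n r m)⁻¹ * cm n r m = 1
  change 1/2 < (cm n r m)⁻¹ * cm n r m at hm
  refine inv_mul_cancel₀ fun h0 => ?_
  rw [h0] at hm; norm_num at hm

lemma Km_nonneg {n : ℕ} {r : ℝ} (hr : 0 < r) (m : ℕ) (z : EE n) : 0 ≤ Km r m z :=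
  indicator_nonneg (fun z hz => mul_nonneg (inv_nonneg.2 (cm_nonneg hr m)) (pow_nonneg (wf_nonneg hr hz) _)) z

lemma Km_norm {n : ℕ} {r : ℝ} (hr : 0 < r) : Tendsto (fun m => ∫ z : EE n, Km r m z * ‖z‖) atTop (𝓝 0) := by
  have h := peak (n := n) hr (fun z => ‖z‖) continuous_norm
  rw [norm_zero] at h
  refine h.congr fun m => ?_
  rw [← integral_const_mul, ← integral_indicator measurableSet_closedBall]
  congr 1; ext z
  unfold Km indicator
  split_ifs <;> ring

lemma conv_tendsto {n : ℕ} {r : ℝ} (hr : 0 < r) (h : EE n → ℝ) (hc : Continuous h) (hs : HasCompactSupport h) 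
    (ε : ℝ) (hε : 0 < ε) : ∀ᶠ m in atTop, ∀ x, |conv (Km r m) h x - h x| ≤ ε := by
  obtain ⟨M, hM⟩ := hs.exists_bound_of_continuous hc
  have hM0 : 0 ≤ M := (norm_nonneg _).trans (hM 0)
  have hu := HasCompactSupport.uniformContinuous_of_continuous hs hc
  obtain ⟨δ, hδ, hu⟩ := Metric.uniformContinuous_iff.1 hu (ε/2) (half_pos hε)
  have hbd : ∀ x t, |h (x - t) - h x| ≤ ε/2 + (2*M/δ) * ‖t‖ := by
    intro x t
    by_cases ht : ‖t‖ < δ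
    · have := hu (a := x - t) (b := x) (by simpa [dist_eq_norm] using ht)
      rw [Real.dist_eq] at this
      have : 0 ≤ (2*M/δ) * ‖t‖ := by positivity
      linarith
    · push Not at ht
      have h1 := hM (x - t)
      have h2 := hM x
      rw [Real.norm_eq_abs] at h1 h2
      have h3 : 2*M ≤ (2*M/δ) * ‖t‖ := by
        rw [div_mul_eq_mul_div, le_div_iff₀ hδ]; gcongr
      have := abs_sub (h (x-t)) (h x)
      linarith
  have h1 := (Km_norm (n := n) hr).const_mul (2*M/δ)
  rw [mul_zero] at h1
  filter_upwards [Km_one (n := n) hr, h1.eventually (gt_mem_nhds (half_pos hε))] with m hm1 hm2 x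
  have hKi := Km_integrable (n := n) r m
  have hKh : Integrable (fun t => Km r m t * h (x - t)) := by
    refine hKi.mul_bdd (c := M) ?_ ?_
    · exact (hc.comp (by fun_prop)).aestronglyMeasurable
    · exact Eventually.of_forall fun t => hM _
  have hKn : Integrable (fun t : EE n => Km r m t * ‖t‖) := by
    have e : (fun t : EE n => Km r m t * ‖t‖) = fun t => Km r m t * (min ‖t‖ r) := by
      ext t
      unfold Km indicator
      split_ifs with ht
      · rw [min_eq_left (mem_closedBall_zero_iff.1 ht)]
      · simp
    rw [e]
    refine hKi.mul_bdd (c := r) (Continuous.aestronglyMeasurable (by fun_prop)) ?_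
    refine Eventually.of_forall fun t => ?_
    rw [Real.norm_of_nonneg (le_min (norm_nonneg _) hr.le)]
    exact min_le_right _ _
  have e : conv (Km r m) h x - h x = ∫ t, Km r m t * (h (x-t) - h x) := by
    unfold conv
    rw [convolution_mul]
    simp only [mul_sub]
    rw [integral_sub hKh (hKi.mul_const _), integral_mul_const, hm1, one_mul]
  rw [e, ← Real.norm_eq_abs]
  have hb : ∀ t, ‖Km r m t * (h (x-t) - h x)‖ ≤ Km r m t * (ε/2) + (2*M/δ) * (Km r m t * ‖t‖) := by
    intro t
    rw [norm_mul, Real.norm_of_nonneg (Km_nonneg hr m t), Real.norm_eq_abs]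
    have := mul_le_mul_of_nonneg_left (hbd x t) (Km_nonneg hr m t)
    linarith
  refine (norm_integral_le_of_norm_le ((hKi.mul_const _).add (hKn.const_mul _)) (Eventually.of_forall hb)).trans ?_
  simp only [Pi.add_apply]
  rw [integral_add (hKi.mul_const _) (hKn.const_mul _), integral_mul_const, integral_const_mul, hm1]
  linarith

/-- kernels giving polynomials -/
structure PK (n : ℕ) (Φ : EE n → EE n → ℝ) : Prop where
  cont : ∀ x, Continuous (Φ x)
  pol : ∀ g : EE n → ℝ, Continuous g → HasCompactSupport g → ∃ p : MvPolynomial (Fin n) ℝ, 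
    ∀ x : EE n, ∫ t, Φ x t * g t = MvPolynomial.eval (fun i => x i) p

lemma PK.add {n : ℕ} {Φ Ψ : EE n → EE n → ℝ} (h1 : PK n Φ) (h2 : PK n Ψ) : PK n (fun x t => Φ x t + Ψ x t) := by
  refine ⟨fun x => (h1.cont x).add (h2.cont x), fun g hg hs => ?_⟩
  obtain ⟨p, hp⟩ := h1.pol g hg hs
  obtain ⟨q, hq⟩ := h2.pol g hg hs
  refine ⟨p + q, fun x => ?_⟩
  simp only [add_mul]
  rw [integral_add, hp, hq, map_add]
  · exact ((h1.cont x).mul hg).integrable_of_hasCompactSupport hs.mul_left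
  · exact ((h2.cont x).mul hg).integrable_of_hasCompactSupport hs.mul_left

lemma PK.mulr {n : ℕ} {Φ : EE n → EE n → ℝ} (h1 : PK n Φ) (a : EE n → ℝ) (ha : Continuous a) : 
    PK n (fun x t => a t * Φ x t) := by
  refine ⟨fun x => ha.mul (h1.cont x), fun g hg hs => ?_⟩
  obtain ⟨p, hp⟩ := h1.pol (fun t => a t * g t) (ha.mul hg) hs.mul_left
  refine ⟨p, fun x => ?_⟩
  rw [← hp]; congr 1; ext t; ring

lemma PK.mulX {n : ℕ} {Φ : EE n → EE n → ℝ} (h1 : PK n Φ) (i : Fin n) : 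
    PK n (fun x t => x i * Φ x t) := by
  refine ⟨fun x => continuous_const.mul (h1.cont x), fun g hg hs => ?_⟩
  obtain ⟨p, hp⟩ := h1.pol g hg hs
  refine ⟨MvPolynomial.X i * p, fun x => ?_⟩
  rw [map_mul, MvPolynomial.eval_X, ← hp, ← integral_const_mul]; congr 1; ext t; ring

lemma PK.one {n : ℕ} : PK n (fun _ _ => 1) := by
  refine ⟨fun x => continuous_const, fun g hg hs => ⟨MvPolynomial.C (∫ t, g t), fun x => ?_⟩⟩
  simp

lemma PK.zero {n : ℕ} : PK n (fun _ _ => 0) := by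
  refine ⟨fun x => continuous_const, fun g hg hs => ⟨0, fun x => ?_⟩⟩
  simp

lemma PK.sum {n : ℕ} {ι : Type*} (S : Finset ι) {Φ : ι → EE n → EE n → ℝ} (h : ∀ i, PK n (Φ i)) :
    PK n (fun x t => ∑ i ∈ S, Φ i x t) := by
  classical
  induction S using Finset.induction_on with
  | empty => simpa using PK.zero
  | insert a S ha ih => simpa only [Finset.sum_insert ha] using (h a).add ih

lemma PK.wpow {n : ℕ} (r : ℝ) (m : ℕ) : PK n (fun x t => wf r (x - t) ^ m) := by
  induction m with
  | zero => simpa using PK.one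
  | succ m ih =>
    have h := ih.add (PK.sum Finset.univ fun i : Fin n => 
      (((ih.mulX i).mulX i).add ((((ih.mulr (fun t => -2 * t i) (by fun_prop))).mulX i).add 
        (ih.mulr (fun t => t i ^ 2) (by fun_prop)))).mulr (fun _ => - (1 / r^2)) continuous_const)
    convert h using 3 with x t
    rw [pow_succ]
    have e : wf r (x - t) = 1 + ∑ i, (-(1/r^2)) * (x i * x i + (-2 * x i * t i + t i ^2)) := by
      unfold wf
      rw [EuclideanSpace.norm_sq_eq, ← Finset.mul_sum, div_eq_mul_inv]
      have : ∑ i, ‖(x - t) i‖^2 = ∑ i, (x i * x i + (-2 * x i * t i + t i ^2)) := by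
        refine Finset.sum_congr rfl fun i _ => ?_
        rw [Real.norm_eq_abs, sq_abs, PiLp.sub_apply]; ring
      rw [this]; ring
    nth_rewrite 2 [e]
    rw [mul_add, mul_one, Finset.mul_sum]
    congr 1
    refine Finset.sum_congr rfl fun i _ => ?_
    ring

lemma conv_poly {n : ℕ} {r R₀ : ℝ} (hr : 1 + R₀ < r) (m : ℕ) (g : EE n → ℝ) (hg : Continuous g) 
    (hs : HasCompactSupport g) (hsupp : ∀ x, R₀ < ‖x‖ → g x = 0) : ∃ p : MvPolynomial (Fin n) ℝ,
    ∀ x ∈ ball (0:EE n) 1, MvPolynomial.eval (fun i => x i) p = conv (Km r m) g x := by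
  obtain ⟨p, hp⟩ := ((PK.wpow (n := n) r m).mulr (fun _ => (cm n r m)⁻¹) continuous_const).pol g hg hs
  refine ⟨p, fun x hx => ?_⟩
  rw [← hp]
  unfold conv
  rw [convolution_mul_swap]
  congr 1; ext t
  by_cases ht : R₀ < ‖t‖
  · rw [hsupp t ht]; simp
  · unfold Km
    rw [indicator_of_mem]
    rw [mem_closedBall_zero_iff]
    rw [mem_ball_zero_iff] at hx
    have := norm_sub_le x t
    linarith

lemma weier {n : ℕ} (k : ℕ) {R₀ : ℝ} (hR₀ : 0 < R₀) (g : EE n → ℝ) (hg : ContDiff ℝ k g) 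
    (hsupp : ∀ x, R₀ < ‖x‖ → g x = 0) (ε : ℝ) (hε : 0 < ε) : ∃ p : MvPolynomial (Fin n) ℝ,
    ∀ l : List (Fin n), l.length ≤ k → ∀ x ∈ ball (0:EE n) 1, 
      |pd l (fun x : EE n => MvPolynomial.eval (fun i => x i) p) x - pd l g x| ≤ ε := by
  have hs : HasCompactSupport g := HasCompactSupport.intro (isCompact_closedBall (0:EE n) R₀) fun x hx => 
    hsupp x (by simpa using hx)
  have hr : (0:ℝ) < 2 + R₀ := by linarith
  have hfin : {l : List (Fin n) | l.length ≤ k}.Finite := List.finite_length_le _ _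
  have hall : ∀ᶠ m in atTop, ∀ l ∈ {l : List (Fin n) | l.length ≤ k}, ∀ x, 
      |conv (Km (2+R₀) m) (pd l g) x - pd l g x| ≤ ε := by
    refine (eventually_all_finite hfin).2 fun l hl => ?_
    have hl' : l.length ≤ k := hl
    have hc : ContDiff ℝ 0 (pd l g) := contDiff_iff_contDiffAt.2 fun x => 
      dd_contDiffAt _ hg.contDiffAt (by simpa using hl')
    exact conv_tendsto hr _ hc.continuous (dd_compactSupport _ hs) ε hε
  obtain ⟨m, hm⟩ := hall.exists
  obtain ⟨p, hp⟩ := conv_poly (r := 2 + R₀) (by linarith) m g hg.continuous hs hsupp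
  refine ⟨p, fun l hl x hx => ?_⟩
  have e1 : pd l (fun x : EE n => MvPolynomial.eval (fun i => x i) p) x = pd l (conv (Km (2+R₀) m) g) x := by
    refine (dd_congr _ ?_).eq_of_nhds
    filter_upwards [isOpen_ball.mem_nhds hx] with y hy using hp y hy
  have e2 : pd l (conv (Km (2+R₀) m) g) = conv (Km (2+R₀) m) (pd l g) :=
    conv_dd (Km_integrable _ m).locallyIntegrable hg hs _ (by simpa using hl)
  rw [e1, e2]
  exact hm l hl x


lemma iter_pd {n : ℕ} (i : Fin n) (m : ℕ) (l : List (Fin n)) (g : EE n → ℝ) :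
    (partialDeriv n i)^[m] (pd l g) = pd (List.replicate m i ++ l) g := by
  induction m with
  | zero => rfl
  | succ m ih => 
    rw [Function.iterate_succ_apply', ih]
    rfl

lemma fold_pd {n : ℕ} (L : List (Fin n × ℕ)) : ∃ l : List (Fin n), l.length = (L.map Prod.snd).sum ∧
    ∀ g : EE n → ℝ, ((L.map fun q => (partialDeriv n q.1)^[q.2]).foldr (· ∘ ·) id) g = pd l g := by
  induction L with
  | nil => exact ⟨[], rfl, fun g => rfl⟩
  | cons q L ih =>
    obtain ⟨l, h1, h2⟩ := ih
    refine ⟨List.replicate q.2 q.1 ++ l, by simp [h1], fun g => ?_⟩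
    simp only [List.map_cons, List.foldr_cons, Function.comp_apply]
    rw [h2, iter_pd]

lemma multiDeriv_pd {n : ℕ} (β : Fin n → ℕ) : ∃ l : List (Fin n), l.length = ∑ i, β i ∧
    ∀ g : EE n → ℝ, multiDeriv n β g = pd l g := by
  obtain ⟨l, h1, h2⟩ := fold_pd (List.ofFn fun i => (i, β i))
  refine ⟨l, ?_, fun g => ?_⟩
  · rw [h1, List.map_ofFn, List.sum_ofFn]; rfl
  · rw [← h2, List.map_ofFn]; rfl

lemma cutoff {n : ℕ} (k : ℕ) (f : EE n → ℝ) (U : Set (EE n)) (hU : IsOpen U) (hb : closedBall (0 : EE n) 1 ⊆ U)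
    (hf : ContDiffOn ℝ k f U) : ∃ R₀ : ℝ, 0 < R₀ ∧ ∃ g : EE n → ℝ, ContDiff ℝ k g ∧ (∀ x, R₀ < ‖x‖ → g x = 0) ∧
      ∀ x ∈ ball (0 : EE n) 1, g =ᶠ[𝓝 x] f := by
  obtain ⟨δ, hδ, hd⟩ := (isCompact_closedBall (0 : EE n) 1).exists_cthickening_subset_open hU hb
  rw [cthickening_closedBall hδ.le zero_le_one] at hd
  let χ : ContDiffBump (0 : EE n) := ⟨1 + δ/2, 1 + δ, by positivity, by linarith⟩
  refine ⟨1 + δ, by positivity, fun x => χ x * f x, ?_, ?_, ?_⟩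
  · rw [contDiff_iff_contDiffAt]
    intro x
    by_cases hx : x ∈ U
    · exact χ.contDiffAt.mul (hf.contDiffAt (hU.mem_nhds hx))
    · have : x ∉ tsupport χ := fun h => hx (hd (by rw [χ.tsupport_eq] at h; simpa [χ, add_comm] using h))
      have h0 := notMem_tsupport_iff_eventuallyEq.1 this
      refine (contDiffAt_const (c := (0:ℝ))).congr_of_eventuallyEq ?_
      filter_upwards [h0] with y hy
      rw [hy]; simp
  · intro x hx
    have : χ x = 0 := χ.zero_of_le_dist (by rw [dist_zero_right]; exact hx.le)
    simp [this]
  · intro x hx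
    filter_upwards [isOpen_ball.mem_nhds hx] with y hy
    have : χ y = 1 := χ.one_of_mem_closedBall (by
      rw [mem_closedBall]; rw [mem_ball] at hy; show dist y 0 ≤ 1 + δ/2; linarith)
    simp [this]

theorem all_functions_locally_sHarmonic
    (n : ℕ) (hn : 1 ≤ n) (s : ℝ) (hs : s ∈ Set.Ioo (0:ℝ) 1) (k : ℕ)
    (f : EuclideanSpace ℝ (Fin n) → ℝ)
    (hf : ∃ U : Set (EuclideanSpace ℝ (Fin n)), IsOpen U ∧
      Metric.closedBall (0 : EuclideanSpace ℝ (Fin n)) 1 ⊆ U ∧ ContDiffOn ℝ k f U) :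
    ∀ ε : ℝ, 0 < ε →
      ∃ R : ℝ, 1 < R ∧
        ∃ u : EuclideanSpace ℝ (Fin n) → ℝ,
          (∃ C : ℝ, ∀ x y, |u x - u y| ≤ C * ‖x - y‖ ^ s) ∧
          (∀ x ∉ Metric.ball (0 : EuclideanSpace ℝ (Fin n)) R, u x = 0) ∧
          (∀ x ∈ Metric.ball (0 : EuclideanSpace ℝ (Fin n)) 1,
            Filter.Tendsto
              (fun δ : ℝ => ∫ y in {y : EuclideanSpace ℝ (Fin n) | δ < ‖y - x‖},
                (u x - u y) / ‖x - y‖ ^ ((n : ℝ) + 2 * s))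
              (𝓝[>] (0:ℝ)) (𝓝 0)) ∧
          ContDiffOn ℝ (⊤ : ℕ∞) u (Metric.ball (0 : EuclideanSpace ℝ (Fin n)) 1) ∧
          ∀ β : Fin n → ℕ, (∑ i, β i) ≤ k →
            ∀ x ∈ Metric.ball (0 : EuclideanSpace ℝ (Fin n)) 1,
              |multiDeriv n β u x - multiDeriv n β f x| < ε := by
  intro ε hε
  obtain ⟨U, hU, hb, hf⟩ := hf
  obtain ⟨R₀, hR₀, g, hg, hg0, hgf⟩ := cutoff k f U hU hb hf
  obtain ⟨p, hp⟩ := weier k hR₀ g hg hg0 (ε/3) (by positivity)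
  obtain ⟨u, hu, hup⟩ := (AA.poly hn hs k p).appr (ε/3) (by positivity)
  obtain ⟨R, hR⟩ := hu.supp
  refine ⟨max R 0 + 2, by linarith [le_max_right R 0], u, hu.hold, ?_, hu.harm, hu.smooth, ?_⟩
  · intro x hx
    rw [mem_ball_zero_iff, not_lt] at hx
    exact hR x (by linarith [le_max_left R 0])
  · intro β hβ x hx
    obtain ⟨l, hl, hm⟩ := multiDeriv_pd β
    rw [hm, hm]
    have h1 := hup l (hl ▸ hβ) x hx
    have h2 := hp l (hl ▸ hβ) x hx
    have h3 : pd l g x = pd l f x := (dd_congr _ (hgf x hx)).eq_of_nhds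
    rw [h3] at h2
    rw [abs_le] at h1 h2
    rw [abs_lt]
    constructor <;> linarith
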